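/- Let N ≥ 1, m > 1, and let u be a radial very weak solution of Eq. (E) with initial datum u₀ ∈ L^∞(ℝ^N) ∩ C(ℝ^N), u₀ ≥ 0, u₀ ≢ 0, which is radially symmetric and radially non-increasing (i.e., u₀(r₁) ≥ u₀(r₂) whenever 0 ≤ r₁ ≤ r₂). Then for every t > 0 the function u(·,t) is radially symmetric and radially non-increasing in r = |x|. -/

import Mathlib

open Real MeasureTheory Set Filter Topology

noncomputable section

/-- `v` (in radial variables: `v r t`, `r = |x|`) is a radial very weak solution of the
nonhomogeneous porous medium equation `|x|^{-2} ∂ₜ u = Δ(u^m)` in dimension `N`,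
with initial datum `v₀`: `v` is nonnegative, continuous on `ℝ^N × (0,∞)`, bounded on
`ℝ^N × [0,T]` for every `T`, and satisfies the very weak (integral) formulation against
every nonnegative test function `φ ∈ C^{2,1}` vanishing on the lateral boundary. -/
def IsRadialVeryWeakSolution (N : ℕ) (m : ℝ) (v : ℝ → ℝ → ℝ) (v₀ : ℝ → ℝ) : Prop :=
  (∀ r t, 0 ≤ v r t) ∧
  ContinuousOn (fun p : ℝ × ℝ => v p.1 p.2) (Set.Ici 0 ×ˢ Set.Ioi 0) ∧
  (∀ T : ℝ, 0 < T → ∃ C : ℝ, ∀ r ∈ Set.Ici (0 : ℝ), ∀ t ∈ Set.Icc (0 : ℝ) T, v r t ≤ C) ∧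
  ∀ (r₁ r₂ T : ℝ) (φ φt φr φrr : ℝ → ℝ → ℝ),
    0 < r₁ → r₁ < r₂ → 0 < T →
    (∀ r t, 0 ≤ φ r t) →
    (∀ r t, HasDerivAt (fun τ => φ r τ) (φt r t) t) →
    (∀ r t, HasDerivAt (fun ρ => φ ρ t) (φr r t) r) →
    (∀ r t, HasDerivAt (fun ρ => φr ρ t) (φrr r t) r) →
    Continuous (fun p : ℝ × ℝ => φ p.1 p.2) →
    Continuous (fun p : ℝ × ℝ => φt p.1 p.2) →
    Continuous (fun p : ℝ × ℝ => φr p.1 p.2) →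
    Continuous (fun p : ℝ × ℝ => φrr p.1 p.2) →
    (∀ t ∈ Set.Ico (0 : ℝ) T, φ r₁ t = 0 ∧ φ r₂ t = 0) →
    (∫ t in (0 : ℝ)..T, ∫ r in r₁..r₂,
        (r ^ (-2 : ℝ) * v r t * φt r t
          + (φrr r t + (((N : ℝ) - 1) / r) * φr r t) * v r t ^ m) * r ^ ((N : ℝ) - 1))
      = (∫ r in r₁..r₂,
          r ^ (-2 : ℝ) * (v r T * φ r T - v₀ r * φ r 0) * r ^ ((N : ℝ) - 1))
        + ∫ t in (0 : ℝ)..T,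
            (r₂ ^ ((N : ℝ) - 1) * v r₂ t ^ m * φr r₂ t
              - r₁ ^ ((N : ℝ) - 1) * v r₁ t ^ m * φr r₁ t)

namespace RMP

lemma integrable_expAbs : Integrable (fun s : ℝ => exp (-|s|)) := by
  have h1 : IntegrableOn (fun s : ℝ => exp (-|s|)) (Iic 0) := by
    refine (integrableOn_exp_mul_Iic (a := 1) one_pos 0).congr_fun ?_ measurableSet_Iic
    intro x hx
    simp only [mem_Iic] at hx
    simp [abs_of_nonpos hx]
  have h2 : IntegrableOn (fun s : ℝ => exp (-|s|)) (Ioi 0) := by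
    refine (integrableOn_exp_mul_Ioi (a := -1) (by norm_num) 0).congr_fun ?_ measurableSet_Ioi
    intro x hx
    simp only [mem_Ioi] at hx
    simp [abs_of_pos hx]
  have := h1.union h2
  rwa [Iic_union_Ioi, integrableOn_univ] at this

lemma expAbs_le (s τ : ℝ) : exp (-|τ|) ≤ exp (-|s|) * exp (|s - τ|) := by
  rw [← exp_add]
  apply exp_le_exp.2
  have := abs_sub_abs_le_abs_sub s τ
  linarith

/-- left exponential average -/
def Iop (p : ℝ) (g : ℝ → ℝ) (s : ℝ) : ℝ := exp (-p * s) * ∫ τ in Iic s, exp (p * τ) * g τ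

lemma iop_integrable {p A : ℝ} (hp : 1 < p) {g : ℝ → ℝ} (hg : Measurable g)
    (hb : ∀ s, |g s| ≤ A * exp (-|s|)) (s : ℝ) :
    IntegrableOn (fun τ => exp (p * τ) * g τ) (Iic s) := by
  have h0 : IntegrableOn (fun τ => A * exp (p * τ)) (Iic s) :=
    (integrableOn_exp_mul_Iic (by linarith) s).const_mul A
  have hA : 0 ≤ A := by
    have := (abs_nonneg _).trans (hb 0)
    simpa using this
  refine Integrable.mono' h0 ?_ ?_
  · exact (by fun_prop : Measurable fun τ => exp (p * τ) * g τ).aestronglyMeasurable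
  · refine Eventually.of_forall fun τ => ?_
    rw [norm_mul, norm_eq_abs, norm_eq_abs, abs_of_pos (exp_pos _), mul_comm]
    gcongr
    calc |g τ| ≤ A * exp (-|τ|) := hb τ
      _ ≤ A * 1 := by
        gcongr
        exact exp_le_one_iff.2 (by simp)
      _ = A := mul_one A

lemma iop_bound {p A : ℝ} (hp : 1 < p) {g : ℝ → ℝ} (hg : Measurable g)
    (hb : ∀ s, |g s| ≤ A * exp (-|s|)) (s : ℝ) :
    |Iop p g s| ≤ A / (p - 1) * exp (-|s|) := by
  have hA : 0 ≤ A := by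
    have := (abs_nonneg _).trans (hb 0)
    simpa using this
  have h0 : IntegrableOn (fun τ => A * exp (-|s|) * exp s * exp ((p - 1) * τ)) (Iic s) :=
    (integrableOn_exp_mul_Iic (by linarith) s).const_mul _
  have h1 : ‖∫ τ in Iic s, exp (p * τ) * g τ‖ ≤
      ∫ τ in Iic s, A * exp (-|s|) * exp s * exp ((p - 1) * τ) := by
    refine norm_integral_le_of_norm_le h0 ?_
    refine (ae_restrict_iff' measurableSet_Iic).2 (Eventually.of_forall fun τ hτ => ?_)
    simp only [mem_Iic] at hτ
    rw [norm_mul, norm_eq_abs, norm_eq_abs, abs_of_pos (exp_pos _)]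
    calc exp (p * τ) * |g τ| ≤ exp (p * τ) * (A * (exp (-|s|) * exp (|s - τ|))) := by
          gcongr
          exact (hb τ).trans (by gcongr; exact expAbs_le s τ)
      _ = A * exp (-|s|) * (exp (p * τ) * exp (|s - τ|)) := by ring
      _ = A * exp (-|s|) * (exp s * exp ((p - 1) * τ)) := by
          rw [abs_of_nonneg (by linarith : 0 ≤ s - τ), ← exp_add, ← exp_add]
          ring_nf
      _ = _ := by ring
  rw [integral_const_mul, integral_exp_mul_Iic (by linarith)] at h1
  unfold Iop
  rw [abs_mul, abs_of_pos (exp_pos _)]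
  rw [norm_eq_abs] at h1
  calc exp (-p * s) * |∫ τ in Iic s, exp (p * τ) * g τ|
      ≤ exp (-p * s) * (A * exp (-|s|) * exp s * (exp ((p - 1) * s) / (p - 1))) := by gcongr
    _ = A / (p - 1) * exp (-|s|) * (exp (-p * s) * exp s * exp ((p - 1) * s)) := by ring
    _ = _ := by
      rw [← exp_add, ← exp_add]
      ring_nf
      simp

lemma iop_eq {p A : ℝ} (hp : 1 < p) {g : ℝ → ℝ} (hg : Measurable g)
    (hb : ∀ s, |g s| ≤ A * exp (-|s|)) (s : ℝ) :
    Iop p g s = exp (-p * s) * ((∫ τ in Iic 0, exp (p * τ) * g τ)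
      + ∫ τ in (0:ℝ)..s, exp (p * τ) * g τ) := by
  unfold Iop
  rw [← intervalIntegral.integral_Iic_sub_Iic (iop_integrable hp hg hb 0)
    (iop_integrable hp hg hb s)]
  ring

lemma iop_continuous {p A : ℝ} (hp : 1 < p) {g : ℝ → ℝ} (hg : Measurable g)
    (hb : ∀ s, |g s| ≤ A * exp (-|s|)) : Continuous (Iop p g) := by
  have : Iop p g = fun s => exp (-p * s) * ((∫ τ in Iic 0, exp (p * τ) * g τ)
      + ∫ τ in (0:ℝ)..s, exp (p * τ) * g τ) := funext (iop_eq hp hg hb)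
  rw [this]
  have hc := intervalIntegral.continuous_primitive (μ := volume)
    (f := fun τ => exp (p * τ) * g τ) (fun a b => by
      rw [intervalIntegrable_iff]
      exact (iop_integrable hp hg hb (max a b)).mono_set fun x hx => hx.2) 0
  fun_prop

lemma iop_deriv {p A : ℝ} (hp : 1 < p) {g : ℝ → ℝ} (hg : Continuous g)
    (hb : ∀ s, |g s| ≤ A * exp (-|s|)) (s : ℝ) :
    HasDerivAt (Iop p g) (-p * Iop p g s + g s) s := by
  have : Iop p g = fun s => exp (-p * s) * ((∫ τ in Iic 0, exp (p * τ) * g τ)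
      + ∫ τ in (0:ℝ)..s, exp (p * τ) * g τ) := funext (iop_eq hp hg.measurable hb)
  rw [this]
  have hc : Continuous (fun τ => exp (p * τ) * g τ) := by fun_prop
  have h1 := (hc.integral_hasStrictDerivAt 0 s).hasDerivAt.const_add
    (∫ τ in Iic 0, exp (p * τ) * g τ)
  have h2 : HasDerivAt (fun s => exp (-p * s)) (exp (-p * s) * (-p)) s := by
    simpa using ((hasDerivAt_id s).const_mul (-p)).exp
  refine (h2.mul h1).congr_deriv ?_
  have : exp (-p * s) * (exp (p * s) * g s) = g s := by
    rw [← mul_assoc, ← exp_add]; simp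
  simp only [this]
  ring

lemma iop_mono {p A B : ℝ} (hp : 1 < p) {f g : ℝ → ℝ} (hf : Measurable f) (hg : Measurable g)
    (hfb : ∀ s, |f s| ≤ B * exp (-|s|))
    (hb : ∀ s, |g s| ≤ A * exp (-|s|)) (hfg : ∀ s, f s ≤ g s) (s : ℝ) :
    Iop p f s ≤ Iop p g s := by
  unfold Iop
  refine mul_le_mul_of_nonneg_left ?_ (exp_pos _).le
  refine integral_mono (iop_integrable hp hf hfb s) (iop_integrable hp hg hb s) fun τ => ?_
  exact mul_le_mul_of_nonneg_left (hfg τ) (exp_pos _).le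

lemma iop_tendsto {p A : ℝ} (hp : 1 < p) {g : ℕ → ℝ → ℝ} {G : ℝ → ℝ} (hg : ∀ n, Measurable (g n))
    (hb : ∀ n s, |g n s| ≤ A * exp (-|s|)) (hl : ∀ s, Tendsto (fun n => g n s) atTop (𝓝 (G s)))
    (s : ℝ) : Tendsto (fun n => Iop p (g n) s) atTop (𝓝 (Iop p G s)) := by
  unfold Iop
  refine Tendsto.const_mul _ ?_
  refine tendsto_integral_of_dominated_convergence (fun τ => exp (p * τ) * (A * exp (-|τ|)))
    (fun n => (iop_integrable hp (hg n) (hb n) s).aestronglyMeasurable) ?_ ?_ ?_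
  · refine iop_integrable (A := A) hp (g := fun τ => A * exp (-|τ|)) (by fun_prop) (fun s => ?_) s
    have hA : 0 ≤ A := by
      have := (abs_nonneg _).trans (hb 0 0)
      simpa using this
    rw [abs_of_nonneg (by positivity)]
  · intro n
    refine Eventually.of_forall fun τ => ?_
    rw [norm_mul, norm_eq_abs, norm_eq_abs, abs_of_pos (exp_pos _)]
    exact mul_le_mul_of_nonneg_left (hb n τ) (exp_pos _).le
  · exact Eventually.of_forall fun τ => (hl τ).const_mul _

/-- Resolvent of `λ - (∂² - c ∂)` on the line, `λ = p q`, `c = q - p`. -/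
def Gop (p q : ℝ) (g : ℝ → ℝ) (s : ℝ) : ℝ :=
  (Iop p g s + Iop q (fun x => g (-x)) (-s)) / (p + q)

/-- The derivative of `Gop`. -/
def Gop1 (p q : ℝ) (g : ℝ → ℝ) (s : ℝ) : ℝ :=
  (-p * Iop p g s + q * Iop q (fun x => g (-x)) (-s)) / (p + q)

lemma neg_bound {A : ℝ} {g : ℝ → ℝ} (hb : ∀ s, |g s| ≤ A * exp (-|s|)) :
    ∀ s, |(fun x => g (-x)) s| ≤ A * exp (-|s|) := fun s => by
  simpa using hb (-s)

lemma gop_bound {p q A : ℝ} (hp : 1 < p) (hq : 1 < q) {g : ℝ → ℝ} (hg : Measurable g)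
    (hb : ∀ s, |g s| ≤ A * exp (-|s|)) (s : ℝ) :
    |Gop p q g s| ≤ A / ((p - 1) * (q - 1)) * exp (-|s|) := by
  have hA : 0 ≤ A := by
    have := (abs_nonneg _).trans (hb 0)
    simpa using this
  have h1 := iop_bound hp hg hb s
  have h2 := iop_bound hq (by fun_prop : Measurable fun x => g (-x)) (neg_bound hb) (-s)
  rw [abs_neg] at h2
  unfold Gop
  rw [abs_div, abs_of_pos (by linarith : 0 < p + q), div_le_iff₀ (by linarith)]
  refine (abs_add_le _ _).trans ((add_le_add h1 h2).trans ?_)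
  have hp' : 0 < p - 1 := by linarith
  have hq' : 0 < q - 1 := by linarith
  have : A / (p - 1) * exp (-|s|) + A / (q - 1) * exp (-|s|)
      = A / ((p - 1) * (q - 1)) * exp (-|s|) * (p + q - 2) := by
    field_simp
    ring
  rw [this]
  gcongr
  linarith

lemma gop1_bound {p q A : ℝ} (hp : 1 < p) (hq : 1 < q) {g : ℝ → ℝ} (hg : Measurable g)
    (hb : ∀ s, |g s| ≤ A * exp (-|s|)) (s : ℝ) :
    |Gop1 p q g s| ≤ (p * (A / (p - 1)) + q * (A / (q - 1))) * exp (-|s|) := by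
  have h1 := iop_bound hp hg hb s
  have h2 := iop_bound hq (by fun_prop : Measurable fun x => g (-x)) (neg_bound hb) (-s)
  rw [abs_neg] at h2
  unfold Gop1
  rw [abs_div, abs_of_pos (by linarith : 0 < p + q)]
  refine (div_le_self (abs_nonneg _) (by linarith)).trans ?_
  refine (abs_add_le _ _).trans ?_
  rw [abs_mul, abs_mul, abs_neg, abs_of_pos (by linarith : 0 < p), abs_of_pos (by linarith : 0 < q)]
  nlinarith [mul_le_mul_of_nonneg_left h1 (by linarith : 0 ≤ p),
    mul_le_mul_of_nonneg_left h2 (by linarith : 0 ≤ q)]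

lemma gop_continuous {p q A : ℝ} (hp : 1 < p) (hq : 1 < q) {g : ℝ → ℝ} (hg : Measurable g)
    (hb : ∀ s, |g s| ≤ A * exp (-|s|)) : Continuous (Gop p q g) := by
  have h1 := iop_continuous hp hg hb
  have h2 := iop_continuous hq (by fun_prop : Measurable fun x => g (-x)) (neg_bound hb)
  unfold Gop
  fun_prop

lemma gop_deriv {p q A : ℝ} (hp : 1 < p) (hq : 1 < q) {g : ℝ → ℝ} (hg : Continuous g)
    (hb : ∀ s, |g s| ≤ A * exp (-|s|)) (s : ℝ) : HasDerivAt (Gop p q g) (Gop1 p q g s) s := by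
  have h1 := iop_deriv hp hg hb s
  have h2 := (iop_deriv hq (by fun_prop : Continuous fun x => g (-x)) (neg_bound hb) (-s)).comp s
    (hasDerivAt_neg s)
  refine ((h1.add h2).div_const (p + q)).congr_deriv ?_
  unfold Gop1
  simp

lemma gop1_deriv {p q A : ℝ} (hp : 1 < p) (hq : 1 < q) {g : ℝ → ℝ} (hg : Continuous g)
    (hb : ∀ s, |g s| ≤ A * exp (-|s|)) (s : ℝ) :
    HasDerivAt (Gop1 p q g) (p * q * Gop p q g s + (q - p) * Gop1 p q g s - g s) s := by
  have h1 := (iop_deriv hp hg hb s).const_mul (-p)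
  have h2 := ((iop_deriv hq (by fun_prop : Continuous fun x => g (-x)) (neg_bound hb) (-s)).comp s
    (hasDerivAt_neg s)).const_mul q
  refine ((h1.add h2).div_const (p + q)).congr_deriv ?_
  unfold Gop1 Gop
  have : p + q ≠ 0 := by linarith
  field_simp
  ring

lemma gop_mono {p q A B : ℝ} (hp : 1 < p) (hq : 1 < q) {f g : ℝ → ℝ} (hf : Measurable f)
    (hg : Measurable g) (hfb : ∀ s, |f s| ≤ B * exp (-|s|))
    (hb : ∀ s, |g s| ≤ A * exp (-|s|)) (hfg : ∀ s, f s ≤ g s) (s : ℝ) :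
    Gop p q f s ≤ Gop p q g s := by
  unfold Gop
  have h1 := iop_mono hp hf hg hfb hb hfg s
  have h2 := iop_mono hq (by fun_prop : Measurable fun x => f (-x))
    (by fun_prop : Measurable fun x => g (-x)) (neg_bound hfb) (neg_bound hb)
    (fun s => hfg (-s)) (-s)
  have : 0 < p + q := by linarith
  gcongr

lemma gop_tendsto {p q A : ℝ} (hp : 1 < p) (hq : 1 < q) {g : ℕ → ℝ → ℝ} {G : ℝ → ℝ}
    (hg : ∀ n, Measurable (g n))
    (hb : ∀ n s, |g n s| ≤ A * exp (-|s|)) (hl : ∀ s, Tendsto (fun n => g n s) atTop (𝓝 (G s)))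
    (s : ℝ) : Tendsto (fun n => Gop p q (g n) s) atTop (𝓝 (Gop p q G s)) := by
  unfold Gop
  refine Tendsto.div_const (Tendsto.add (iop_tendsto hp hg hb hl s) ?_) _
  exact iop_tendsto hq (fun n => (hg n).comp measurable_neg) (fun n => neg_bound (hb n))
    (fun s => hl (-s)) (-s)

end RMP

namespace RMP

/-- Nonnegative `C²` functions on the line which decay like `exp (-|s|)` with two derivatives. -/
structure Dec (f f1 f2 : ℝ → ℝ) : Prop where
  nonneg : ∀ s, 0 ≤ f s
  d1 : ∀ s, HasDerivAt f (f1 s) s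
  d2 : ∀ s, HasDerivAt f1 (f2 s) s
  cont2 : Continuous f2
  bound : ∃ C, 0 ≤ C ∧ (∀ s, |f s| ≤ C * exp (-|s|)) ∧ (∀ s, |f1 s| ≤ C * exp (-|s|)) ∧
    ∀ s, |f2 s| ≤ C * exp (-|s|)

lemma Dec.cont {f f1 f2 : ℝ → ℝ} (h : Dec f f1 f2) : Continuous f :=
  continuous_iff_continuousAt.2 fun s => (h.d1 s).continuousAt

lemma Dec.cont1 {f f1 f2 : ℝ → ℝ} (h : Dec f f1 f2) : Continuous f1 :=
  continuous_iff_continuousAt.2 fun s => (h.d2 s).continuousAt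

/-- Right-hand side of the fixed point problem. -/
def rhs (lam : ℝ) (b f η : ℝ → ℝ) (s : ℝ) : ℝ := (lam - b s) * η s + b s * f s

/-- Picard iteration. -/
def iter (p q : ℝ) (b f : ℝ → ℝ) : ℕ → ℝ → ℝ
  | 0 => fun _ => 0
  | n + 1 => Gop p q (rhs (p * q) b f (iter p q b f n))

lemma rhs_bound {lam b0 F : ℝ} {b f η : ℝ → ℝ} (hb0 : 0 ≤ b0) (hb : ∀ s, b0 ≤ b s)
    (hbl : ∀ s, b s ≤ lam)
    (hf0 : ∀ s, 0 ≤ f s) (hf : ∀ s, |f s| ≤ F * exp (-|s|))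
    (h0 : ∀ s, 0 ≤ η s) (h1 : ∀ s, η s ≤ 2 * F * exp (-|s|)) (s : ℝ) :
    |rhs lam b f η s| ≤ (2 * lam - b0) * F * exp (-|s|) := by
  unfold rhs
  have hfs : f s ≤ F * exp (-|s|) := (le_abs_self _).trans (hf s)
  rw [abs_of_nonneg (add_nonneg (mul_nonneg (by linarith [hbl s]) (h0 s))
    (mul_nonneg (by linarith [hb s]) (hf0 s)))]
  have e1 := mul_le_mul_of_nonneg_left (h1 s) (by linarith [hbl s] : 0 ≤ lam - b s)
  have e2 := mul_le_mul_of_nonneg_left hfs (by linarith [hb s] : 0 ≤ b s)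
  have e3 := mul_le_mul_of_nonneg_right (hb s) ((hf0 s).trans hfs)
  nlinarith

lemma iter_prop {p q b0 F : ℝ} {b f : ℝ → ℝ} (hp : 1 < p) (hq : 1 < q) (hb : ∀ s, b0 ≤ b s)
    (hbl : ∀ s, b s ≤ p * q) (hb0 : 2 * (p + q) ≤ b0) (hbc : Continuous b) (hfc : Continuous f)
    (hf0 : ∀ s, 0 ≤ f s) (hf : ∀ s, |f s| ≤ F * exp (-|s|)) (n : ℕ) :
    Continuous (iter p q b f n) ∧ (∀ s, 0 ≤ iter p q b f n s) ∧
      (∀ s, iter p q b f n s ≤ 2 * F * exp (-|s|)) := by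
  have hF : 0 ≤ F := by
    have := (abs_nonneg _).trans (hf 0)
    simpa using this
  induction n with
  | zero =>
    refine ⟨continuous_const, fun s => le_rfl, fun s => ?_⟩
    simp only [iter]
    positivity
  | succ n ih =>
    obtain ⟨h1, h2, h3⟩ := ih
    have hm : Continuous (rhs (p * q) b f (iter p q b f n)) := by
      unfold rhs
      fun_prop
    have hbd := rhs_bound (lam := p * q) (by linarith) hb hbl hf0 hf h2 h3
    refine ⟨gop_continuous hp hq hm.measurable hbd, fun s => ?_, fun s => ?_⟩
    · have h0 : Gop p q (fun _ => 0) s = 0 := by simp [Gop, Iop]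
      simp only [iter]
      rw [← h0]
      refine gop_mono (B := 0) hp hq measurable_const hm.measurable (by simp) hbd (fun s => ?_) s
      unfold rhs
      exact add_nonneg (mul_nonneg (by linarith [hbl s]) (h2 s))
        (mul_nonneg (by linarith [hb s]) (hf0 s))
    · refine (le_abs_self _).trans ((gop_bound hp hq hm.measurable hbd s).trans ?_)
      gcongr
      rw [div_le_iff₀ (mul_pos (by linarith) (by linarith))]
      nlinarith

lemma solve {p q b0 : ℝ} {b f f1 f2 : ℝ → ℝ} (hp : 1 < p) (hq : 1 < q) (hb : ∀ s, b0 ≤ b s)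
    (hbl : ∀ s, b s ≤ p * q) (hb0 : 2 * (p + q) ≤ b0) (hbc : Continuous b) (hf : Dec f f1 f2) :
    ∃ η η1 η2, Dec η η1 η2 ∧ ∀ s, η2 s - (q - p) * η1 s = b s * (η s - f s) := by
  obtain ⟨F, hF0, hF, -, -⟩ := hf.bound
  have hfc := hf.cont
  have hP := iter_prop hp hq hb hbl hb0 hbc hfc hf.nonneg hF
  have hmono : ∀ s, Monotone (fun n => iter p q b f n s) := by
    intro s
    refine monotone_nat_of_le_succ fun n => ?_
    induction n generalizing s with
    | zero => exact (hP 1).2.1 s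
    | succ n ih =>
      obtain ⟨h1, h2, h3⟩ := hP n
      obtain ⟨h1', h2', h3'⟩ := hP (n + 1)
      have hm : Measurable (rhs (p * q) b f (iter p q b f n)) := by
        unfold rhs
        fun_prop
      have hm' : Measurable (rhs (p * q) b f (iter p q b f (n + 1))) := by
        unfold rhs
        fun_prop
      refine gop_mono hp hq hm hm' (rhs_bound (lam := p * q) (by linarith) hb hbl hf.nonneg hF h2 h3)
        (rhs_bound (lam := p * q) (by linarith) hb hbl hf.nonneg hF h2' h3') (fun s => ?_) s
      unfold rhs
      have := mul_le_mul_of_nonneg_left (ih s) (by linarith [hbl s] : 0 ≤ p * q - b s)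
      linarith
  set η : ℝ → ℝ := fun s => ⨆ n, iter p q b f n s with hη
  have hlim : ∀ s, Tendsto (fun n => iter p q b f n s) atTop (𝓝 (η s)) := fun s =>
    tendsto_atTop_ciSup (hmono s) ⟨2 * F * exp (-|s|), by
      rintro _ ⟨n, rfl⟩
      exact (hP n).2.2 s⟩
  have hη0 : ∀ s, 0 ≤ η s := fun s => ge_of_tendsto' (hlim s) fun n => (hP n).2.1 s
  have hη2 : ∀ s, η s ≤ 2 * F * exp (-|s|) := fun s =>
    le_of_tendsto' (hlim s) fun n => (hP n).2.2 s
  have hηm : Measurable η :=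
    measurable_of_tendsto_metrizable (fun n => (hP n).1.measurable) (tendsto_pi_nhds.2 hlim)
  have hrm : Measurable (rhs (p * q) b f η) := by
    unfold rhs
    fun_prop
  have hrb := rhs_bound (lam := p * q) (by linarith) hb hbl hf.nonneg hF hη0 hη2
  have hfix : η = Gop p q (rhs (p * q) b f η) := by
    funext s
    refine tendsto_nhds_unique ((tendsto_add_atTop_iff_nat 1).2 (hlim s)) ?_
    refine gop_tendsto (g := fun n => rhs (p * q) b f (iter p q b f n)) hp hq (fun n => ?_) (fun n =>
      rhs_bound (lam := p * q) (by linarith) hb hbl hf.nonneg hF (hP n).2.1 (hP n).2.2)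
      (fun s => ?_) s
    · have := (hP n).1
      unfold rhs
      fun_prop
    · unfold rhs
      exact ((hlim s).const_mul _).add_const _
  have hηc : Continuous η := by
    rw [hfix]
    exact gop_continuous hp hq hrm hrb
  have hrc : Continuous (rhs (p * q) b f η) := by
    unfold rhs
    fun_prop
  have hd1 : ∀ s, HasDerivAt η (Gop1 p q (rhs (p * q) b f η) s) s := by
    intro s
    have := gop_deriv hp hq hrc hrb s
    rwa [← hfix] at this
  have hd2 : ∀ s, HasDerivAt (Gop1 p q (rhs (p * q) b f η))
      ((q - p) * Gop1 p q (rhs (p * q) b f η) s + b s * (η s - f s)) s := by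
    intro s
    have := gop1_deriv hp hq hrc hrb s
    rw [← hfix] at this
    refine this.congr_deriv ?_
    unfold rhs
    ring
  have hc1 : Continuous (Gop1 p q (rhs (p * q) b f η)) :=
    continuous_iff_continuousAt.2 fun s => (hd2 s).continuousAt
  refine ⟨η, Gop1 p q (rhs (p * q) b f η), _, ⟨hη0, hd1, hd2, by fun_prop, ?_⟩, fun s => by ring⟩
  have hg1 := gop1_bound hp hq hrm hrb
  set D := p * ((2 * (p * q) - b0) * F / (p - 1)) + q * ((2 * (p * q) - b0) * F / (q - 1)) with hD
  have hD0 : 0 ≤ D := by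
    have := (abs_nonneg _).trans (hg1 0)
    simpa using this
  have hpq : 0 < p * q := by nlinarith
  have hcD := mul_nonneg (abs_nonneg (q - p)) hD0
  have hpF := mul_nonneg hpq.le hF0
  refine ⟨2 * F + D + |q - p| * D + p * q * (3 * F), by positivity, fun s => ?_, fun s => ?_,
    fun s => ?_⟩
  · rw [abs_of_nonneg (hη0 s)]
    refine (hη2 s).trans ?_
    gcongr
    nlinarith
  · refine (hg1 s).trans ?_
    gcongr
    nlinarith
  · have e1 : |b s * (η s - f s)| ≤ p * q * (3 * F * exp (-|s|)) := by
      rw [abs_mul, abs_of_nonneg (by linarith [hb s] : 0 ≤ b s)]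
      refine mul_le_mul (hbl s) ?_ (abs_nonneg _) hpq.le
      refine (abs_sub _ _).trans ?_
      rw [abs_of_nonneg (hη0 s)]
      linarith [hη2 s, hF s]
    have e2 : |(q - p) * Gop1 p q (rhs (p * q) b f η) s| ≤ |q - p| * (D * exp (-|s|)) := by
      rw [abs_mul]
      exact mul_le_mul_of_nonneg_left (hg1 s) (abs_nonneg _)
    refine (abs_add_le _ _).trans ((add_le_add e2 e1).trans ?_)
    have e3 : 0 ≤ (2 * F + D) * exp (-|s|) := by positivity
    nlinarith

end RMP

namespace RMP

lemma cosh_le (s : ℝ) : cosh s ≤ exp |s| := by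
  rw [← cosh_abs, cosh_eq]
  have : exp (-|s|) ≤ exp |s| := exp_le_exp.2 (by linarith [abs_nonneg s])
  linarith

lemma cosh_ge (s : ℝ) : exp |s| / 2 ≤ cosh s := by
  rw [← cosh_abs, cosh_eq]
  have := exp_pos (-|s|)
  linarith

lemma inv_cosh_le (s : ℝ) : 1 / cosh s ≤ 2 * exp (-|s|) := by
  rw [div_le_iff₀ (cosh_pos s)]
  have := cosh_ge s
  have h2 : exp (-|s|) * exp |s| = 1 := by rw [← exp_add]; simp
  nlinarith [exp_pos (-|s|)]

lemma abs_sinh_le (s : ℝ) : |sinh s| ≤ cosh s := by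
  rw [abs_le, sinh_eq, cosh_eq]
  constructor <;> linarith [exp_pos s, exp_pos (-s)]

lemma continuous_inv_cosh : Continuous (fun s : ℝ => 1 / cosh s) :=
  continuous_const.div continuous_cosh fun s => (cosh_pos s).ne'

lemma integrable_inv_cosh : Integrable (fun s : ℝ => 1 / cosh s) := by
  refine (integrable_expAbs.const_mul 2).mono' continuous_inv_cosh.aestronglyMeasurable ?_
  refine Eventually.of_forall fun s => ?_
  rw [norm_eq_abs, abs_of_pos (by have := cosh_pos s; positivity)]
  exact inv_cosh_le s

lemma integrable_bdd {k u : ℝ → ℝ} {K C : ℝ} (hk : Continuous k) (hu : Continuous u)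
    (hkb : ∀ s, |k s| ≤ K) (hub : ∀ s, |u s| ≤ C * exp (-|s|)) :
    Integrable (fun s => k s * u s) := by
  refine (integrable_expAbs.const_mul (K * C)).mono' (by fun_prop) ?_
  refine Eventually.of_forall fun s => ?_
  rw [norm_mul, norm_eq_abs, norm_eq_abs, mul_assoc]
  have hK : 0 ≤ K := (abs_nonneg _).trans (hkb 0)
  exact mul_le_mul (hkb s) (hub s) (abs_nonneg _) hK

lemma integrable_wt {k u v : ℝ → ℝ} {K C D : ℝ} (hk : Continuous k) (hu : Continuous u)
    (hv : Continuous v)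
    (hkb : ∀ s, |k s| ≤ K * cosh s) (hub : ∀ s, |u s| ≤ C * exp (-|s|))
    (hvb : ∀ s, |v s| ≤ D * exp (-|s|)) :
    Integrable (fun s => k s * u s * v s) := by
  have hK : 0 ≤ K := by
    have := (abs_nonneg _).trans (hkb 0)
    simpa using this
  have hC : 0 ≤ C := by
    have := (abs_nonneg _).trans (hub 0)
    simpa using this
  refine integrable_bdd (K := K * C) (C := D) (by fun_prop) hv (fun s => ?_) hvb
  rw [abs_mul]
  calc |k s| * |u s| ≤ (K * exp |s|) * (C * exp (-|s|)) := by
        refine mul_le_mul ((hkb s).trans ?_) (hub s) (abs_nonneg _) (by positivity)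
        gcongr
        exact cosh_le s
    _ = K * C * (exp |s| * exp (-|s|)) := by ring
    _ = K * C := by rw [← exp_add]; simp

/-- weighted energy -/
def En (f1 : ℝ → ℝ) : ℝ := ∫ s, cosh s * f1 s * f1 s

lemma Dec.lin_bound {f f1 f2 : ℝ → ℝ} (h : Dec f f1 f2) (c : ℝ) :
    ∃ C, ∀ s, |f2 s - c * f1 s| ≤ C * exp (-|s|) := by
  obtain ⟨C, hC, h0, h1, h2⟩ := h.bound
  refine ⟨C + |c| * C, fun s => ?_⟩
  refine (abs_sub _ _).trans ?_
  rw [abs_mul, add_mul, mul_assoc]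
  exact add_le_add (h2 s) (mul_le_mul_of_nonneg_left (h1 s) (abs_nonneg _))

lemma energy {η η1 η2 f f1 f2 a : ℝ → ℝ} {c h K : ℝ} (hη : Dec η η1 η2) (hf : Dec f f1 f2)
    (hh : 0 < h) (ha0 : ∀ s, 0 ≤ a s) (haK : ∀ s, a s ≤ K) (hac : Continuous a)
    (heq : ∀ s, η s - f s = h * a s * (η2 s - c * η1 s)) :
    (1 - h * ((|c| + 1) ^ 2 * K)) * En η1 +
      h * ∫ s, cosh s * a s * (η2 s - c * η1 s) * (η2 s - c * η1 s) ≤ En f1 := by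
  obtain ⟨C, hC, b0, b1, b2⟩ := hη.bound
  obtain ⟨C', hC', b0', b1', b2'⟩ := hf.bound
  obtain ⟨G, hG⟩ := hη.lin_bound c
  have cη := hη.cont
  have cη1 := hη.cont1
  have cη2 := hη.cont2
  have cf := hf.cont
  have cf1 := hf.cont1
  have hcosh := continuous_cosh
  have hsinh := continuous_sinh
  have hK : 0 ≤ K := (ha0 0).trans (haK 0)
  have hwc : ∀ s, |cosh s| ≤ 1 * cosh s := fun s => by rw [abs_of_pos (cosh_pos s), one_mul]
  have hws : ∀ s, |sinh s| ≤ 1 * cosh s := fun s => by rw [one_mul]; exact abs_sinh_le s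
  have hsub : ∀ s, |η s - f s| ≤ (C + C') * exp (-|s|) := fun s => by
    refine (abs_sub _ _).trans ?_
    linarith [b0 s, b0' s]
  have hsub1 : ∀ s, |η1 s - f1 s| ≤ (C + C') * exp (-|s|) := fun s => by
    refine (abs_sub _ _).trans ?_
    linarith [b1 s, b1' s]
  have i0 : Integrable (fun s => cosh s * (η s - f s) * η1 s) :=
    integrable_wt hcosh (by fun_prop) cη1 hwc hsub b1
  have i1 : Integrable (fun s => sinh s * (η s - f s) * η1 s) :=
    integrable_wt hsinh (by fun_prop) cη1 hws hsub b1
  have i2 : Integrable (fun s => cosh s * (η1 s - f1 s) * η1 s) :=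
    integrable_wt hcosh (by fun_prop) cη1 hwc hsub1 b1
  have i3 : Integrable (fun s => cosh s * (η s - f s) * η2 s) :=
    integrable_wt hcosh (by fun_prop) cη2 hwc hsub b2
  have j1 : Integrable (fun s => cosh s * η1 s * η1 s) := integrable_wt hcosh cη1 cη1 hwc b1 b1
  have j2 : Integrable (fun s => cosh s * f1 s * f1 s) := integrable_wt hcosh cf1 cf1 hwc b1' b1'
  have j3 : Integrable (fun s => cosh s * a s * (η2 s - c * η1 s) * (η2 s - c * η1 s)) := by
    refine integrable_wt (K := K) (by fun_prop) (by fun_prop) (by fun_prop) (fun s => ?_) hG hG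
    rw [abs_mul, abs_of_pos (cosh_pos s), abs_of_nonneg (ha0 s), mul_comm]
    exact mul_le_mul_of_nonneg_right (haK s) (cosh_pos s).le
  have hIntg : Integrable (fun s => (sinh s * (η s - f s) + cosh s * (η1 s - f1 s)) * η1 s
      + cosh s * (η s - f s) * η2 s) := by
    refine ((i1.add i2).add i3).congr (Eventually.of_forall fun s => ?_)
    simp only [Pi.add_apply]
    ring
  have hz : ∫ s, ((sinh s * (η s - f s) + cosh s * (η1 s - f1 s)) * η1 s
      + cosh s * (η s - f s) * η2 s) = 0 := by
    refine integral_eq_zero_of_hasDerivAt_of_integrable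
      (f := fun s => cosh s * (η s - f s) * η1 s) (fun s => ?_) hIntg i0
    exact ((hasDerivAt_cosh s).mul ((hη.d1 s).sub (hf.d1 s))).mul (hη.d2 s)
  have hle : ∫ s, ((1 - h * ((|c| + 1) ^ 2 * K)) * (cosh s * η1 s * η1 s) +
      h * (cosh s * a s * (η2 s - c * η1 s) * (η2 s - c * η1 s)) - cosh s * f1 s * f1 s) ≤
      ∫ s, 2 * ((sinh s * (η s - f s) + cosh s * (η1 s - f1 s)) * η1 s
      + cosh s * (η s - f s) * η2 s) := by
    refine integral_mono (((j1.const_mul _).add (j3.const_mul _)).sub j2) (hIntg.const_mul 2)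
      fun s => ?_
    simp only
    have hω := cosh_pos s
    rw [heq s]
    set g := η2 s - c * η1 s with hg
    have e2 : η2 s = g + c * η1 s := by rw [hg]; ring
    rw [e2]
    have k1 : |(c * cosh s + sinh s) * η1 s * g| ≤ cosh s * ((|c| + 1) * |η1 s| * |g|) := by
      rw [abs_mul, abs_mul]
      have : |c * cosh s + sinh s| ≤ cosh s * (|c| + 1) := by
        refine (abs_add_le _ _).trans ?_
        rw [abs_mul, abs_of_pos hω]
        linarith [abs_sinh_le s]
      calc |c * cosh s + sinh s| * |η1 s| * |g| ≤ cosh s * (|c| + 1) * |η1 s| * |g| := by gcongr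
        _ = _ := by ring
    have k2 : 2 * ((|c| + 1) * |η1 s| * |g|) ≤ (|c| + 1) ^ 2 * η1 s ^ 2 + g ^ 2 := by
      have := sq_nonneg ((|c| + 1) * |η1 s| - |g|)
      have h1 := sq_abs (η1 s)
      have h2 := sq_abs g
      nlinarith
    have k3 : 2 * (η1 s - f1 s) * η1 s ≥ η1 s * η1 s - f1 s * f1 s := by
      nlinarith [sq_nonneg (η1 s - f1 s)]
    have k4 := neg_abs_le ((c * cosh s + sinh s) * η1 s * g)
    have k5 : -(cosh s * ((|c| + 1) ^ 2 * η1 s ^ 2 + g ^ 2)) ≤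
        2 * ((c * cosh s + sinh s) * η1 s * g) := by nlinarith
    have k6 := mul_le_mul_of_nonneg_left k5 (mul_nonneg hh.le (ha0 s))
    have k7 := mul_le_mul_of_nonneg_left k3 hω.le
    have k8 : h * a s * (cosh s * ((|c| + 1) ^ 2 * η1 s ^ 2)) ≤
        h * K * (cosh s * ((|c| + 1) ^ 2 * η1 s ^ 2)) := by
      have := haK s
      gcongr
    nlinarith
  rw [integral_const_mul, hz, mul_zero, integral_sub, integral_add, integral_const_mul,
    integral_const_mul] at hle
  · unfold En
    linarith
  · exact j1.const_mul _
  · exact j3.const_mul _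
  · exact (j1.const_mul _).add (j3.const_mul _)
  · exact j2

end RMP

namespace RMP

/-- Hypotheses of the linear comparison argument. -/
structure Core (c T K M : ℝ) (w z : ℝ → ℝ → ℝ) (w0 : ℝ → ℝ) : Prop where
  T0 : 0 < T
  K0 : 0 ≤ K
  M0 : 0 ≤ M
  wc : ContinuousOn (fun x : ℝ × ℝ => w x.1 x.2) (univ ×ˢ Ioi 0)
  zc : ContinuousOn (fun x : ℝ × ℝ => z x.1 x.2) (univ ×ˢ Ioi 0)
  wb : ∀ s, ∀ t ∈ Ioc 0 T, |w s t| ≤ M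
  zw : ∀ s, ∀ t ∈ Ioc 0 T, |z s t| ≤ K * |w s t|
  zpos : ∀ s, ∀ t ∈ Ioc 0 T, 0 ≤ z s t * w s t
  w0c : Continuous w0
  w0le : ∀ s, w0 s ≤ 0
  w0b : ∀ s, |w0 s| ≤ M
  weak : ∀ η η1 η2, Dec η η1 η2 → ∀ t ∈ Ioc 0 T,
    ∫ τ in (0:ℝ)..t, ∫ s, z s τ * (η2 s - c * η1 s) = ∫ s, (w s t - w0 s) * η s

lemma cont_slice {z : ℝ → ℝ → ℝ}
    (zc : ContinuousOn (fun x : ℝ × ℝ => z x.1 x.2) (univ ×ˢ Ioi 0)) {t : ℝ} (ht : 0 < t) :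
    Continuous (fun s => z s t) := by
  rw [← continuousOn_univ]
  exact zc.comp (f := fun s : ℝ => (s, t)) (by fun_prop) fun s _ => ⟨mem_univ _, ht⟩

lemma cont_slice' {z : ℝ → ℝ → ℝ}
    (zc : ContinuousOn (fun x : ℝ × ℝ => z x.1 x.2) (univ ×ˢ Ioi 0)) (s : ℝ) :
    ContinuousOn (fun t => z s t) (Ioi 0) :=
  zc.comp (f := fun t : ℝ => (s, t)) (by fun_prop) fun t ht => ⟨mem_univ _, ht⟩

variable {c T K M : ℝ} {w z : ℝ → ℝ → ℝ} {w0 : ℝ → ℝ}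

lemma Core.zb (H : Core c T K M w z w0) (s : ℝ) {t : ℝ} (ht : t ∈ Ioc 0 T) :
    |z s t| ≤ K * M :=
  (H.zw s t ht).trans (mul_le_mul_of_nonneg_left (H.wb s t ht) H.K0)

/-- `w` extended by the initial datum at `t = 0`. -/
def Wext (w : ℝ → ℝ → ℝ) (w0 : ℝ → ℝ) (t : ℝ) (s : ℝ) : ℝ := if t ≤ 0 then w0 s else w s t

lemma Core.Wcont (H : Core c T K M w z w0) {t : ℝ} (ht : t ∈ Icc 0 T) :
    Continuous (Wext w w0 t) := by
  unfold Wext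
  rcases le_or_gt t 0 with h | h
  · simpa [h] using H.w0c
  · simpa [not_le.2 h] using cont_slice H.wc h

lemma Core.Wb (H : Core c T K M w z w0) {t : ℝ} (ht : t ∈ Icc 0 T) (s : ℝ) :
    |Wext w w0 t s| ≤ M := by
  unfold Wext
  split_ifs with h
  · exact H.w0b s
  · exact H.wb s t ⟨not_le.1 h, ht.2⟩

lemma Core.Zint (H : Core c T K M w z w0) {u : ℝ → ℝ} {C : ℝ} (hu : Continuous u)
    (hub : ∀ s, |u s| ≤ C * exp (-|s|)) {t : ℝ} (ht : t ∈ Ioc 0 T) :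
    Integrable (fun s => z s t * u s) :=
  integrable_bdd (cont_slice H.zc ht.1) hu (fun s => H.zb s ht) hub

lemma Core.Zinterval (H : Core c T K M w z w0) {u : ℝ → ℝ} {C : ℝ} (hu : Continuous u)
    (hub : ∀ s, |u s| ≤ C * exp (-|s|)) {t0 t1 : ℝ} (h0 : 0 ≤ t0) (h01 : t0 ≤ t1) (h1 : t1 ≤ T) :
    IntervalIntegrable (fun t => ∫ s, z s t * u s) volume t0 t1 := by
  rw [intervalIntegrable_iff_integrableOn_Ioc_of_le h01]
  have hsub : Ioc t0 t1 ⊆ Ioc 0 T := Ioc_subset_Ioc h0 h1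
  have hc : ContinuousOn (fun t => ∫ s, z s t * u s) (Ioc 0 T) := by
    refine continuousOn_of_dominated (bound := fun s => K * M * (C * exp (-|s|)))
      (fun t ht => (H.Zint hu hub ht).aestronglyMeasurable) (fun t ht => ?_)
      ((integrable_expAbs.const_mul _).const_mul _) ?_
    · refine Eventually.of_forall fun s => ?_
      rw [norm_mul, norm_eq_abs, norm_eq_abs]
      exact mul_le_mul (H.zb s ht) (hub s) (abs_nonneg _) (mul_nonneg H.K0 H.M0)
    · refine Eventually.of_forall fun s => ?_
      exact ((cont_slice' H.zc s).mono Ioc_subset_Ioi_self).mul continuousOn_const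
  refine Integrable.mono' (g := fun _ => ∫ s, K * M * (C * exp (-|s|))) (integrable_const _)
    ((hc.mono hsub).aestronglyMeasurable measurableSet_Ioc) ?_
  · refine (ae_restrict_iff' measurableSet_Ioc).2 (Eventually.of_forall fun t ht => ?_)
    refine norm_integral_le_of_norm_le ((integrable_expAbs.const_mul _).const_mul _)
      (Eventually.of_forall fun s => ?_)
    rw [norm_mul, norm_eq_abs, norm_eq_abs]
    exact mul_le_mul (H.zb s (hsub ht)) (hub s) (abs_nonneg _) (mul_nonneg H.K0 H.M0)

lemma Core.weak_ext (H : Core c T K M w z w0) {η η1 η2 : ℝ → ℝ} (hη : Dec η η1 η2) {t0 t1 : ℝ}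
    (h0 : 0 ≤ t0) (h01 : t0 ≤ t1) (h1 : t1 ≤ T) :
    ∫ τ in t0..t1, ∫ s, z s τ * (η2 s - c * η1 s) =
      (∫ s, Wext w w0 t1 s * η s) - ∫ s, Wext w w0 t0 s * η s := by
  obtain ⟨C, hC, b0, b1, b2⟩ := hη.bound
  obtain ⟨G, hG⟩ := hη.lin_bound c
  have cη := hη.cont
  have cη1 := hη.cont1
  have cη2 := hη.cont2
  have key : ∀ t ∈ Icc 0 T, ∫ τ in (0:ℝ)..t, ∫ s, z s τ * (η2 s - c * η1 s) =
      (∫ s, Wext w w0 t s * η s) - ∫ s, w0 s * η s := by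
    intro t ht
    rcases eq_or_lt_of_le ht.1 with h | h
    · subst h
      simp [Wext]
    · rw [H.weak η η1 η2 hη t ⟨h, ht.2⟩, ← integral_sub]
      · congr 1
        funext s
        simp only [Wext, not_le.2 h, if_false]
        ring
      · exact integrable_bdd (H.Wcont ht) cη (H.Wb ht) b0
      · exact integrable_bdd H.w0c cη H.w0b b0
  have hu : Continuous (fun s => η2 s - c * η1 s) := by fun_prop
  have e := intervalIntegral.integral_interval_sub_left
    (H.Zinterval hu hG le_rfl (h0.trans h01) h1) (H.Zinterval hu hG le_rfl h0 (h01.trans h1))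
  rw [← e, key t1 ⟨h0.trans h01, h1⟩, key t0 ⟨h0, h01.trans h1⟩]
  ring

/-- total mass of `1/cosh` -/
def Jc : ℝ := ∫ s : ℝ, 1 / cosh s

lemma Jc_nonneg : 0 ≤ Jc := integral_nonneg fun s => by have := cosh_pos s; positivity

/-- Weighted distance of two time slices of `z`. -/
def Fd (z : ℝ → ℝ → ℝ) (t τ : ℝ) : ℝ := ∫ s, (z s t - z s τ) ^ 2 * (1 / cosh s)

lemma Core.fd_int (H : Core c T K M w z w0) {t τ : ℝ} (ht : t ∈ Ioc 0 T) (hτ : τ ∈ Ioc 0 T) :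
    Integrable (fun s => (z s t - z s τ) ^ 2 * (1 / cosh s)) := by
  have c1 := cont_slice H.zc ht.1
  have c2 := cont_slice H.zc hτ.1
  refine integrable_bdd (K := (2 * (K * M)) ^ 2) (C := 2) (by fun_prop) continuous_inv_cosh
    (fun s => ?_) (fun s => ?_)
  · rw [abs_pow]
    refine pow_le_pow_left₀ (abs_nonneg _) ?_ 2
    refine (abs_sub _ _).trans ?_
    linarith [H.zb s ht, H.zb s hτ]
  · rw [abs_of_pos (by have := cosh_pos s; positivity)]
    exact inv_cosh_le s

lemma Core.fd_le (H : Core c T K M w z w0) {t τ : ℝ} (ht : t ∈ Ioc 0 T) (hτ : τ ∈ Ioc 0 T) :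
    Fd z t τ ≤ (2 * (K * M)) ^ 2 * Jc := by
  unfold Fd Jc
  rw [← integral_const_mul]
  refine integral_mono (H.fd_int ht hτ) (integrable_inv_cosh.const_mul _) fun s => ?_
  have := cosh_pos s
  simp only
  gcongr ?_ * _
  rw [← sq_abs]
  refine pow_le_pow_left₀ (abs_nonneg _) ?_ 2
  refine (abs_sub _ _).trans ?_
  linarith [H.zb s ht, H.zb s hτ]

lemma Core.step (H : Core c T K M w z w0) {f f1 f2 : ℝ → ℝ} (hf : Dec f f1 f2)
    {p ε δ ρ h t0 : ℝ} (hp : 1 < p) (hq : 1 < p + c) (hε : 0 < ε) (hδ : 0 < δ) (hh : 0 < h)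
    (h0 : 0 ≤ t0) (h1 : t0 + h ≤ T) (hpq : 1 / (h * ε) ≤ p * (p + c))
    (hpq' : 2 * (p + (p + c)) ≤ 1 / (h * (K + ε)))
    (hρ : ∀ t ∈ Ioo t0 (t0 + h), Fd z t (t0 + h) ≤ ρ) :
    ∃ η η1 η2, Dec η η1 η2 ∧ ∃ D, 0 ≤ D ∧
      (1 - h * ((|c| + 1) ^ 2 * (K + ε))) * En η1 + h * D ≤ En f1 ∧
      ∫ s, Wext w w0 (t0 + h) s * f s ≤ (∫ s, Wext w w0 t0 s * η s) + δ * (h * D) +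
        h * (ρ / (2 * δ * ε) + ε * (K + M) ^ 2 * Jc / (2 * δ)) := by
  set t1 := t0 + h with ht1
  have ht1m : t1 ∈ Ioc 0 T := ⟨by linarith, h1⟩
  have cw := cont_slice H.wc ht1m.1
  have cz := cont_slice H.zc ht1m.1
  have hK := H.K0
  have hM := H.M0
  set a : ℝ → ℝ := fun s => z s t1 * w s t1 / (w s t1 ^ 2 + ε ^ 2) + ε with ha
  have hden : ∀ s, 0 < w s t1 ^ 2 + ε ^ 2 := fun s => by positivity
  have hac : Continuous a := by
    refine Continuous.add (Continuous.div (by fun_prop) (by fun_prop) fun s => (hden s).ne')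
      continuous_const
  have haε : ∀ s, ε ≤ a s := fun s => by
    have : 0 ≤ z s t1 * w s t1 / (w s t1 ^ 2 + ε ^ 2) := div_nonneg (H.zpos s t1 ht1m) (hden s).le
    simp only [ha]
    linarith
  have haK : ∀ s, a s ≤ K + ε := fun s => by
    have : z s t1 * w s t1 / (w s t1 ^ 2 + ε ^ 2) ≤ K := by
      rw [div_le_iff₀ (hden s)]
      have h1 := le_abs_self (z s t1 * w s t1)
      rw [abs_mul] at h1
      have h2 := mul_le_mul_of_nonneg_right (H.zw s t1 ht1m) (abs_nonneg (w s t1))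
      have h3 := sq_abs (w s t1)
      nlinarith [mul_nonneg hK (sq_nonneg ε)]
    simp only [ha]
    linarith
  have hapos : ∀ s, 0 < a s := fun s => hε.trans_le (haε s)
  have haerr : ∀ s, |z s t1 - a s * w s t1| ≤ ε * (K + M) := by
    intro s
    have e : z s t1 - a s * w s t1 = z s t1 * ε ^ 2 / (w s t1 ^ 2 + ε ^ 2) - ε * w s t1 := by
      simp only [ha]
      have := (hden s).ne'
      field_simp
      ring
    have e1 : |z s t1 * ε ^ 2 / (w s t1 ^ 2 + ε ^ 2)| ≤ K * ε := by
      rw [abs_div, abs_of_pos (hden s), div_le_iff₀ (hden s), abs_mul, abs_of_pos (by positivity : 0 < ε ^ 2)]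
      have h2 := mul_le_mul_of_nonneg_right (H.zw s t1 ht1m) (sq_nonneg ε)
      have h3 := sq_abs (w s t1)
      have h4 : |w s t1| * ε ≤ w s t1 ^ 2 + ε ^ 2 := by
        nlinarith [sq_nonneg (|w s t1| - ε), sq_nonneg (w s t1)]
      have h5 := mul_le_mul_of_nonneg_left h4 (mul_nonneg hK hε.le)
      nlinarith
    rw [e]
    refine (abs_sub _ _).trans ?_
    rw [abs_mul ε, abs_of_pos hε]
    have := mul_le_mul_of_nonneg_left (H.wb s t1 ht1m) hε.le
    linarith
  obtain ⟨η, η1, η2, hη, heq⟩ := solve (b := fun s => 1 / (h * a s)) (b0 := 1 / (h * (K + ε)))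
    hp hq (fun s => by
      have := hapos s
      have := haK s
      gcongr) (fun s => by
      refine le_trans ?_ hpq
      have := haε s
      gcongr) hpq' (by
        refine continuous_const.div (by fun_prop) fun s => ?_
        have := hapos s
        positivity) hf
  have heq' : ∀ s, η s - f s = h * a s * (η2 s - c * η1 s) := fun s => by
    have h1 := heq s
    have h2 := (hapos s).ne'
    rw [show p + c - p = c by ring] at h1
    rw [h1]
    field_simp
  obtain ⟨C, hC, b0, b1, b2⟩ := hη.bound
  obtain ⟨C', hC', b0', b1', b2'⟩ := hf.bound
  obtain ⟨G, hG⟩ := hη.lin_bound c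
  have cη := hη.cont
  have cη1 := hη.cont1
  have cη2 := hη.cont2
  have cf := hf.cont
  have hcosh := continuous_cosh
  set g : ℝ → ℝ := fun s => η2 s - c * η1 s with hg
  have cg : Continuous g := by fun_prop
  have iD : Integrable (fun s => cosh s * a s * g s * g s) := by
    refine integrable_wt (K := K + ε) (by fun_prop) (by fun_prop) (by fun_prop) (fun s => ?_) hG hG
    rw [abs_mul, abs_of_pos (cosh_pos s), abs_of_pos (hapos s), mul_comm]
    exact mul_le_mul_of_nonneg_right (haK s) (cosh_pos s).le
  refine ⟨η, η1, η2, hη, ∫ s, cosh s * a s * g s * g s, integral_nonneg fun s => ?_,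
    energy hη hf hh (fun s => (hapos s).le) haK hac heq', ?_⟩
  · have := cosh_pos s
    have := hapos s
    have := mul_self_nonneg (g s)
    simp only [Pi.zero_apply]
    rw [mul_assoc]
    positivity
  set D := ∫ s, cosh s * a s * g s * g s with hD
  have hW := H.weak_ext hη h0 (by linarith : t0 ≤ t1) h1
  have iwag : Integrable (fun s => a s * w s t1 * g s) := by
    refine integrable_bdd (K := (K + ε) * M) (by fun_prop) cg (fun s => ?_) hG
    rw [abs_mul, abs_of_pos (hapos s)]
    exact mul_le_mul (haK s) (H.wb s t1 ht1m) (abs_nonneg _) (by positivity)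
  have hWf : ∫ s, Wext w w0 t1 s * f s = (∫ s, Wext w w0 t1 s * η s)
      - h * ∫ s, a s * w s t1 * g s := by
    rw [← integral_const_mul, ← integral_sub]
    · congr 1
      funext s
      have := heq' s
      simp only [Wext, not_le.2 ht1m.1, if_false]
      have e : f s = η s - h * a s * g s := by rw [hg]; linarith
      rw [e]
      ring
    · exact integrable_bdd (H.Wcont ⟨ht1m.1.le, h1⟩) cη (H.Wb ⟨ht1m.1.le, h1⟩) b0
    · exact iwag.const_mul h
  have hpt : ∀ t ∈ Ioo t0 t1, ∫ s, z s t * g s ≤ (∫ s, a s * w s t1 * g s) + δ * D +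
      (ρ / (2 * δ * ε) + ε * (K + M) ^ 2 * Jc / (2 * δ)) := by
    intro t ht
    have htm : t ∈ Ioc 0 T := ⟨h0.trans_lt ht.1, ht.2.le.trans h1⟩
    have ifd := H.fd_int htm ht1m
    have hle : ∫ s, (z s t * g s - a s * w s t1 * g s) ≤
        ∫ s, (δ * (cosh s * a s * g s * g s) +
          ((1 / (2 * δ * ε)) * ((z s t - z s t1) ^ 2 * (1 / cosh s))
          + (ε * (K + M) ^ 2 / (2 * δ)) * (1 / cosh s))) := by
      refine integral_mono ((H.Zint cg hG htm).sub iwag) ((iD.const_mul δ).add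
        ((ifd.const_mul _).add (integrable_inv_cosh.const_mul _))) fun s => ?_
      simp only
      have hω := cosh_pos s
      set x := z s t - z s t1
      set y := z s t1 - a s * w s t1 with hy
      have e1 : z s t * g s - a s * w s t1 * g s = (x + y) * g s := by
        simp only [x, hy]; ring
      have e2 : y ^ 2 ≤ ε ^ 2 * (K + M) ^ 2 := by
        rw [← sq_abs, ← mul_pow]
        exact pow_le_pow_left₀ (abs_nonneg _) (haerr s) 2
      have e3 : (x + y) ^ 2 ≤ 2 * x ^ 2 + 2 * (ε ^ 2 * (K + M) ^ 2) := by
        nlinarith [sq_nonneg (x - y)]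
      have e4 : (x + y) * g s ≤ δ * cosh s * ε * g s ^ 2 + (x + y) ^ 2 / (4 * (δ * cosh s * ε)) := by
        set k := δ * cosh s * ε with hk
        have hk0 : 0 < k := by positivity
        have : (x + y) ^ 2 / (4 * k) + k * g s ^ 2 - (x + y) * g s
            = (x + y - 2 * k * g s) ^ 2 / (4 * k) := by
          field_simp
          ring
        have h2 : 0 ≤ (x + y - 2 * k * g s) ^ 2 / (4 * k) := by positivity
        linarith
      have e5 : (x + y) ^ 2 / (4 * (δ * cosh s * ε)) ≤
          (1 / (2 * δ * ε)) * (x ^ 2 * (1 / cosh s))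
          + (ε * (K + M) ^ 2 / (2 * δ)) * (1 / cosh s) := by
        have : (1 / (2 * δ * ε)) * (x ^ 2 * (1 / cosh s))
          + (ε * (K + M) ^ 2 / (2 * δ)) * (1 / cosh s) =
            (2 * x ^ 2 + 2 * (ε ^ 2 * (K + M) ^ 2)) / (4 * (δ * cosh s * ε)) := by
          field_simp
          ring
        rw [this]
        gcongr
      have e6 : δ * cosh s * ε * g s ^ 2 ≤ δ * (cosh s * a s * g s * g s) := by
        have h1 : δ * cosh s * ε * g s ^ 2 ≤ δ * cosh s * a s * g s ^ 2 := by
          have := haε s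
          gcongr
        linarith
      rw [e1]
      linarith
    rw [integral_sub (H.Zint cg hG htm) iwag, integral_add, integral_add, integral_const_mul,
      integral_const_mul, integral_const_mul] at hle
    · have hF := hρ t ht
      have : (1 / (2 * δ * ε)) * Fd z t t1 ≤ ρ / (2 * δ * ε) := by
        rw [div_mul_eq_mul_div, one_mul]
        gcongr
      unfold Fd at this
      have e : ε * (K + M) ^ 2 / (2 * δ) * (∫ s : ℝ, 1 / cosh s) = ε * (K + M) ^ 2 * Jc / (2 * δ) := by
        unfold Jc; ring
      rw [e] at hle
      linarith
    · exact ifd.const_mul _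
    · exact integrable_inv_cosh.const_mul _
    · exact iD.const_mul δ
    · exact (ifd.const_mul _).add (integrable_inv_cosh.const_mul _)
  have hI := intervalIntegral.integral_mono_on_of_le_Ioo (by linarith : t0 ≤ t1)
    (H.Zinterval cg hG h0 (by linarith : t0 ≤ t1) h1)
    (intervalIntegrable_const (μ := volume)) hpt
  rw [hW, intervalIntegral.integral_const, smul_eq_mul, ht1, add_sub_cancel_left, ← ht1] at hI
  rw [hWf]
  linarith

end RMP

namespace RMP

variable {c T K M : ℝ} {w z : ℝ → ℝ → ℝ} {w0 : ℝ → ℝ}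

lemma En_nonneg (f : ℝ → ℝ) : 0 ≤ En f := integral_nonneg fun s => by
  have := cosh_pos s
  simp only [Pi.zero_apply]
  rw [mul_assoc]
  exact mul_nonneg this.le (mul_self_nonneg _)

lemma Core.fd_nonneg (t τ : ℝ) : 0 ≤ Fd z t τ := integral_nonneg fun s => by
  have := cosh_pos s
  simp only [Pi.zero_apply]
  positivity

set_option maxHeartbeats 1000000 in
lemma Core.chain (H : Core c T K M w z w0) 
    {p ε δ ρ h δ0 : ℝ} (hp : 1 < p) (hq : 1 < p + c) (hε : 0 < ε) (hδ : 0 < δ) (hh : 0 < h)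
    (hpq : 1 / (h * ε) ≤ p * (p + c))
    (hpq' : 2 * (p + (p + c)) ≤ 1 / (h * (K + ε)))
    (hhL : h * ((|c| + 1) ^ 2 * (K + ε)) ≤ 1 / 2) (hρ0 : 0 ≤ ρ) (hδ0 : h ≤ δ0)
    (hρ : ∀ t τ, t ∈ Icc δ0 T → τ ∈ Icc δ0 T → |t - τ| ≤ h → Fd z t τ ≤ ρ) (n : ℕ) :
    (n : ℝ) * h ≤ T → ∀ f f1 f2, Dec f f1 f2 →
    ∫ s, Wext w w0 (n * h) s * f s ≤
      δ * ((1 + 2 * (h * ((|c| + 1) ^ 2 * (K + ε)))) ^ n * En f1) +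
      (((2 * (K * M)) ^ 2 * Jc * min (n * h) (2 * δ0) + ρ * (n * h)) / (2 * δ * ε)
        + ε * (K + M) ^ 2 * Jc / (2 * δ) * (n * h)) := by
  have hJ := Jc_nonneg
  set γ := h * ((|c| + 1) ^ 2 * (K + ε)) with hγ
  have hγ0 : 0 ≤ γ := by have := H.K0; positivity
  set A := (2 * (K * M)) ^ 2 * Jc with hA
  have hA0 : 0 ≤ A := by positivity
  induction n with
  | zero =>
    intro _ f f1 f2 hf
    have h1 : ∫ s, Wext w w0 ((0:ℕ) * h) s * f s ≤ 0 := by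
      refine integral_nonpos fun s => ?_
      simp only [Wext, Nat.cast_zero, zero_mul, le_refl, if_true, Pi.zero_apply]
      exact mul_nonpos_of_nonpos_of_nonneg (H.w0le s) (hf.nonneg s)
    have h2 := En_nonneg f1
    have : min (((0:ℕ):ℝ) * h) (2 * δ0) = 0 := by
      rw [Nat.cast_zero, zero_mul]
      exact min_eq_left (by linarith)
    rw [this]
    simp only [Nat.cast_zero, zero_mul, pow_zero, mul_zero, add_zero, zero_div, one_mul]
    simp only [Nat.cast_zero, zero_mul] at h1
    have := mul_nonneg hδ.le h2
    linarith
  | succ n ih =>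
    intro hn f f1 f2 hf
    have hn' : (n : ℝ) * h + h ≤ T := by push_cast at hn; linarith
    have hn0 : 0 ≤ (n : ℝ) * h := by positivity
    set r := if (n : ℝ) * h < δ0 then A else ρ with hr
    obtain ⟨η, η1, η2, hη, D, hD0, hE, hI⟩ := H.step hf (δ := δ) (ρ := r) hp hq hε hδ hh hn0 hn'
      hpq hpq' (fun t ht => by
        have htm : t ∈ Ioc 0 T := ⟨hn0.trans_lt ht.1, ht.2.le.trans hn'⟩
        rw [hr]
        split_ifs with hc
        · exact H.fd_le htm ⟨by linarith, hn'⟩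
        · refine hρ _ _ ⟨by linarith [ht.1], htm.2⟩ ⟨by linarith, hn'⟩ ?_
          rw [abs_le]
          constructor <;> linarith [ht.1, ht.2])
    have hi := ih (by linarith) η η1 η2 hη
    have hcast : ((n + 1 : ℕ) : ℝ) * h = n * h + h := by push_cast; ring
    rw [hcast]
    have hEη := En_nonneg η1
    have hg : En η1 + h * D ≤ (1 + 2 * γ) * En f1 := by
      have h1 := mul_le_mul_of_nonneg_left hE (by linarith : 0 ≤ 1 + 2 * γ)
      have h2 : 0 ≤ (γ - 2 * γ ^ 2) * En η1 := mul_nonneg (by nlinarith) hEη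
      have h3 : 0 ≤ γ * (h * D) := by positivity
      have h4 : (1 + 2 * γ) * ((1 - γ) * En η1 + h * D) =
        En η1 + h * D + (γ - 2 * γ ^ 2) * En η1 + 2 * (γ * (h * D)) := by ring
      linarith
    have hpow : 1 ≤ (1 + 2 * γ) ^ n := one_le_pow₀ (by linarith)
    have hg2 : (1 + 2 * γ) ^ n * En η1 + h * D ≤ (1 + 2 * γ) ^ (n + 1) * En f1 := by
      have h1 := mul_le_mul_of_nonneg_left hg (by linarith : 0 ≤ (1 + 2 * γ) ^ n)
      have h2 : 0 ≤ h * D := by positivity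
      have h3 := mul_le_mul_of_nonneg_right hpow h2
      have h4 : (1 + 2 * γ) ^ n * (En η1 + h * D) =
        (1 + 2 * γ) ^ n * En η1 + (1 + 2 * γ) ^ n * (h * D) := by ring
      have h5 : (1 + 2 * γ) ^ n * ((1 + 2 * γ) * En f1) = (1 + 2 * γ) ^ (n + 1) * En f1 := by ring
      linarith
    have hg3 := mul_le_mul_of_nonneg_left hg2 hδ.le
    have hm : A * min ((n:ℝ) * h) (2 * δ0) + ρ * (n * h) + h * r ≤
        A * min (n * h + h) (2 * δ0) + ρ * (n * h + h) := by
      rw [hr]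
      split_ifs with hc
      · rw [min_eq_left (by linarith), min_eq_left (by linarith)]
        have h1 : 0 ≤ ρ * h := mul_nonneg hρ0 hh.le
        have h2 : A * (n * h + h) + ρ * (n * h + h) =
          A * (n * h) + ρ * (n * h) + h * A + ρ * h := by ring
        linarith
      · have h0 : min ((n:ℝ) * h) (2 * δ0) ≤ min (n * h + h) (2 * δ0) :=
          min_le_min (by linarith) le_rfl
        have h1 := mul_le_mul_of_nonneg_left h0 hA0
        have h2 : ρ * (n * h + h) = ρ * (n * h) + h * ρ := by ring
        linarith
    have hm2 := div_le_div_of_nonneg_right hm (by positivity : 0 ≤ 2 * δ * ε)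
    rw [add_div] at hm2
    have h6 : h * (r / (2 * δ * ε) + ε * (K + M) ^ 2 * Jc / (2 * δ)) = h * r / (2 * δ * ε)
      + ε * (K + M) ^ 2 * Jc / (2 * δ) * h := by ring
    rw [h6] at hI
    linarith

lemma Core.fd_cont (H : Core c T K M w z w0) :
    ContinuousOn (fun x : ℝ × ℝ => Fd z x.1 x.2) (Ioc 0 T ×ˢ Ioc 0 T) := by
  unfold Fd
  refine continuousOn_of_dominated (bound := fun s => (2 * (K * M)) ^ 2 * (1 / cosh s))
    (fun x hx => (H.fd_int hx.1 hx.2).aestronglyMeasurable) (fun x hx => ?_)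
    (integrable_inv_cosh.const_mul _) ?_
  · refine Eventually.of_forall fun s => ?_
    have := cosh_pos s
    rw [norm_mul, norm_eq_abs, norm_eq_abs, abs_of_pos (by positivity : 0 < 1 / cosh s), abs_pow]
    gcongr ?_ * _
    refine pow_le_pow_left₀ (abs_nonneg _) ?_ 2
    refine (abs_sub _ _).trans ?_
    linarith [H.zb s hx.1, H.zb s hx.2]
  · refine Eventually.of_forall fun s => ?_
    have h1 : ContinuousOn (fun x : ℝ × ℝ => z s x.1) (Ioc 0 T ×ˢ Ioc 0 T) :=
      (cont_slice' H.zc s).comp continuousOn_fst fun x hx => hx.1.1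
    have h2 : ContinuousOn (fun x : ℝ × ℝ => z s x.2) (Ioc 0 T ×ˢ Ioc 0 T) :=
      (cont_slice' H.zc s).comp continuousOn_snd fun x hx => hx.2.1
    exact ((h1.sub h2).pow 2).mul continuousOn_const

lemma Core.fd_unif (H : Core c T K M w z w0) {δ0 ρ : ℝ} (hδ0 : 0 < δ0) (hρ : 0 < ρ) :
    ∃ h0 > 0, ∀ t τ, t ∈ Icc δ0 T → τ ∈ Icc δ0 T → |t - τ| ≤ h0 → Fd z t τ ≤ ρ := by
  have hc : IsCompact (Icc δ0 T ×ˢ Icc δ0 T) := isCompact_Icc.prod isCompact_Icc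
  have hsub : Icc δ0 T ⊆ Ioc 0 T := fun x hx => ⟨hδ0.trans_le hx.1, hx.2⟩
  have hu := hc.uniformContinuousOn_of_continuous (H.fd_cont.mono (prod_mono hsub hsub))
  rw [Metric.uniformContinuousOn_iff] at hu
  obtain ⟨d, hd, hu⟩ := hu ρ hρ
  refine ⟨d / 2, by positivity, fun t τ ht hτ htτ => ?_⟩
  have := hu (t, τ) ⟨ht, hτ⟩ (τ, τ) ⟨hτ, hτ⟩ (by
    rw [Prod.dist_eq]
    simp only [dist_self, Real.dist_eq]
    rw [max_eq_left (abs_nonneg _)]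
    linarith)
  simp only at this
  have h0 : Fd z τ τ = 0 := by simp [Fd]
  rw [h0, Real.dist_eq, sub_zero] at this
  exact (le_abs_self _).trans this.le

lemma Core.bound (H : Core c T K M w z w0) (hc : -1 ≤ c) {f f1 f2 : ℝ → ℝ} (hf : Dec f f1 f2)
    {ε δ δ0 ρ : ℝ} (hε : 0 < ε) (hε1 : ε ≤ 1) (hδ : 0 < δ) (hδ0 : 0 < δ0) (hρ : 0 < ρ) :
    ∫ s, w s T * f s ≤ δ * (exp (2 * (T * ((|c| + 1) ^ 2 * (K + 1)))) * En f1) +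
      (((2 * (K * M)) ^ 2 * Jc * (2 * δ0) + ρ * T) / (2 * δ * ε)
        + ε * (K + M) ^ 2 * Jc / (2 * δ) * T) := by
  have hT := H.T0
  have hK := H.K0
  have hJ := Jc_nonneg
  obtain ⟨h0, hh0, hunif⟩ := H.fd_unif hδ0 hρ
  -- conditions on `h`
  have hev : ∀ᶠ n : ℕ in atTop, 0 < T / n ∧ T / n ≤ h0 ∧ T / n ≤ δ0 ∧
      T / n * ((|c| + 1) ^ 2 * (K + ε)) ≤ 1 / 2 ∧
      T / n * (K + ε) * (2 * (2 * 2 + |c|)) + √(T / n) * (4 * (K + ε) / √ε) ≤ 1 := by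
    have ht : Tendsto (fun n : ℕ => T / (n:ℝ)) atTop (𝓝 0) := tendsto_const_div_atTop_nhds_zero_nat T
    have hpos : ∀ᶠ n : ℕ in atTop, 0 < T / n := by
      filter_upwards [eventually_gt_atTop 0] with n hn
      have : (0:ℝ) < n := by exact_mod_cast hn
      positivity
    have e1 := ht.eventually (eventually_le_nhds hh0)
    have e2 := ht.eventually (eventually_le_nhds hδ0)
    have t3 := ht.mul_const ((|c| + 1) ^ 2 * (K + ε))
    rw [zero_mul] at t3
    have e3 := t3.eventually (eventually_le_nhds (by norm_num : (0:ℝ) < 1 / 2))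
    have t4 := ((ht.mul_const (K + ε)).mul_const (2 * (2 * 2 + |c|))).add
      ((continuous_sqrt.continuousAt.tendsto.comp ht).mul_const (4 * (K + ε) / √ε))
    simp only [zero_mul, sqrt_zero, add_zero, Function.comp_def] at t4
    have e4 := t4.eventually (eventually_le_nhds (by norm_num : (0:ℝ) < 1))
    filter_upwards [hpos, e1, e2, e3, e4] with n a b c d e using ⟨a, b, c, d, e⟩
  obtain ⟨n, hn0, hn1, hn2, hn3, hn4⟩ := hev.exists
  set h := T / n with hh
  have hnn : (n : ℝ) ≠ 0 := by
    rintro h'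
    rw [hh, h', div_zero] at hn0
    exact lt_irrefl _ hn0
  have hnh : (n : ℝ) * h = T := by rw [hh]; field_simp
  have hsq : 0 < √(h * ε) := sqrt_pos.2 (by positivity)
  have hp : 2 + 1 / √(h * ε) > 2 := by
    have : 0 < 1 / √(h * ε) := by positivity
    linarith
  have hx : (1 / √(h * ε)) ^ 2 = 1 / (h * ε) := by
    rw [div_pow, sq_sqrt (by positivity), one_pow]
  have hch := H.chain (p := 2 + 1 / √(h * ε)) (δ := δ) (ρ := ρ) (by linarith) (by linarith) hε hδ hn0
    (by
      rw [← hx]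
      set y := 1 / √(h * ε)
      nlinarith)
    (by
      rw [le_div_iff₀ (by positivity)]
      refine le_trans ?_ hn4
      have e1 : h * (1 / √(h * ε)) = √h / √ε := by
        rw [sqrt_mul hn0.le]
        have h1 : √h ≠ 0 := (sqrt_pos.2 hn0).ne'
        have h2 : √ε ≠ 0 := (sqrt_pos.2 hε).ne'
        field_simp
        rw [sq_sqrt hn0.le]
      have e2 : 2 * (2 + 1 / √(h * ε) + (2 + 1 / √(h * ε) + c)) * (h * (K + ε)) =
        h * (K + ε) * (2 * (2 * 2 + c)) + 4 * (K + ε) * (h * (1 / √(h * ε))) := by ring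
      rw [e2, e1]
      have e3 : h * (K + ε) * (2 * (2 * 2 + c)) ≤ h * (K + ε) * (2 * (2 * 2 + |c|)) := by
        have := le_abs_self c
        gcongr
      have e4 : 4 * (K + ε) * (√h / √ε) = √h * (4 * (K + ε) / √ε) := by ring
      linarith)
    hn3 hρ.le hn2 (fun t τ ht hτ htτ => hunif t τ ht hτ (htτ.trans hn1)) n hnh.le f f1 f2 hf
  rw [hnh] at hch
  have hW : ∀ s, Wext w w0 T s = w s T := fun s => by simp [Wext, not_le.2 hT]
  simp only [hW] at hch
  refine hch.trans ?_
  have hE := En_nonneg f1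
  have hpow : (1 + 2 * (h * ((|c| + 1) ^ 2 * (K + ε)))) ^ n ≤
      exp (2 * (T * ((|c| + 1) ^ 2 * (K + 1)))) := by
    have h1 : 1 + 2 * (h * ((|c| + 1) ^ 2 * (K + ε))) ≤ exp (2 * (h * ((|c| + 1) ^ 2 * (K + 1)))) := by
      have := add_one_le_exp (2 * (h * ((|c| + 1) ^ 2 * (K + 1))))
      have h2 : h * ((|c| + 1) ^ 2 * (K + ε)) ≤ h * ((|c| + 1) ^ 2 * (K + 1)) := by gcongr
      linarith
    refine (pow_le_pow_left₀ (by positivity) h1 n).trans ?_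
    rw [← exp_nat_mul]
    apply le_of_eq
    congr 1
    rw [← hnh]
    ring
  gcongr
  exact min_le_right _ _

lemma Core.integral_nonpos (H : Core c T K M w z w0) (hc : -1 ≤ c) {f f1 f2 : ℝ → ℝ}
    (hf : Dec f f1 f2) : ∫ s, w s T * f s ≤ 0 := by
  have hT := H.T0
  set X := exp (2 * (T * ((|c| + 1) ^ 2 * (K + 1)))) * En f1 with hX
  set A := (2 * (K * M)) ^ 2 * Jc with hA
  set B := (K + M) ^ 2 * Jc with hB
  have key := fun ε δ δ0 ρ => H.bound hc hf (ε := ε) (δ := δ) (δ0 := δ0) (ρ := ρ)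
  -- let δ0 = ρ → 0
  have k1 : ∀ ε δ : ℝ, 0 < ε → ε ≤ 1 → 0 < δ →
      ∫ s, w s T * f s ≤ δ * X + ε * B / (2 * δ) * T := by
    intro ε δ hε hε1 hδ
    have ht : Tendsto (fun x : ℝ => δ * X + ((A * (2 * x) + x * T) / (2 * δ * ε)
        + ε * B / (2 * δ) * T)) (𝓝[>] 0) (𝓝 (δ * X + ((A * (2 * 0) + 0 * T) / (2 * δ * ε)
        + ε * B / (2 * δ) * T))) := by
      refine Tendsto.mono_left (Continuous.tendsto ?_ 0) nhdsWithin_le_nhds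
      fun_prop
    have := ge_of_tendsto ht (by
      filter_upwards [self_mem_nhdsWithin] with x hx
      have := key ε δ x x hε hε1 hδ hx hx
      simp only [hB, ← mul_assoc]
      simp only [← mul_assoc] at this
      simpa [hX, hA, ← mul_assoc] using this)
    simpa using this
  have k2 : ∀ δ : ℝ, 0 < δ → ∫ s, w s T * f s ≤ δ * X := by
    intro δ hδ
    have ht : Tendsto (fun x : ℝ => δ * X + x * B / (2 * δ) * T) (𝓝[>] 0)
        (𝓝 (δ * X + 0 * B / (2 * δ) * T)) := by
      refine Tendsto.mono_left (Continuous.tendsto ?_ 0) nhdsWithin_le_nhds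
      fun_prop
    have := ge_of_tendsto ht (by
      filter_upwards [Ioc_mem_nhdsGT one_pos] with x hx
      exact k1 x δ hx.1 hx.2 hδ)
    simpa using this
  have ht : Tendsto (fun x : ℝ => x * X) (𝓝[>] 0) (𝓝 (0 * X)) := by
    refine Tendsto.mono_left (Continuous.tendsto ?_ 0) nhdsWithin_le_nhds
    fun_prop
  have := ge_of_tendsto ht (by
    filter_upwards [self_mem_nhdsWithin] with x hx
    exact k2 x hx)
  simpa using this

lemma bdd_of_compact {f : ℝ → ℝ} (hf : Continuous f) (hs : HasCompactSupport f) :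
    ∃ C, 0 ≤ C ∧ ∀ s, |f s| ≤ C * exp (-|s|) := by
  obtain ⟨C, hC⟩ := (hs.mul_right (f' := fun s => exp |s|)).exists_bound_of_continuous
    (by fun_prop : Continuous (f * fun s => exp |s|))
  refine ⟨C, (norm_nonneg _).trans (hC 0), fun s => ?_⟩
  have := hC s
  simp only [Pi.mul_apply, norm_mul, norm_eq_abs, abs_exp] at this
  calc |f s| = |f s| * exp |s| * exp (-|s|) := by rw [mul_assoc, ← exp_add]; simp
    _ ≤ _ := by gcongr

lemma dec_of_compact {f : ℝ → ℝ} (hf : ContDiff ℝ 2 f) (h0 : ∀ s, 0 ≤ f s)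
    (hs : HasCompactSupport f) : Dec f (deriv f) (deriv (deriv f)) := by
  have h1 : ContDiff ℝ 1 (deriv f) := by
    exact (contDiff_succ_iff_deriv.1 (by exact_mod_cast hf : ContDiff ℝ (1 + 1) f)).2.2
  have c2 : Continuous (deriv (deriv f)) := h1.continuous_deriv le_rfl
  obtain ⟨C0, p0, b0⟩ := bdd_of_compact hf.continuous hs
  obtain ⟨C1, p1, b1⟩ := bdd_of_compact h1.continuous hs.deriv
  obtain ⟨C2, p2, b2⟩ := bdd_of_compact c2 hs.deriv.deriv
  refine ⟨h0, fun s => (hf.differentiable (by norm_num) s).hasDerivAt,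
    fun s => (h1.differentiable (by norm_num) s).hasDerivAt, c2, C0 + C1 + C2, by positivity,
    fun s => (b0 s).trans ?_, fun s => (b1 s).trans ?_, fun s => (b2 s).trans ?_⟩ <;> gcongr <;>
    linarith

lemma Core.le_zero (H : Core c T K M w z w0) (hc : -1 ≤ c) (s : ℝ) : w s T ≤ 0 := by
  by_contra! hpos
  have cw := cont_slice H.wc H.T0
  obtain ⟨d, hd, hball⟩ := Metric.mem_nhds_iff.1 (cw.continuousAt.eventually (lt_mem_nhds hpos))
  let φ : ContDiffBump s := ⟨d / 2, d, by positivity, by linarith⟩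
  have hdec := dec_of_compact (f := φ) φ.contDiff (fun x => φ.nonneg) φ.hasCompactSupport
  have hle := H.integral_nonpos hc hdec
  have hcont : Continuous (fun x => w x T * φ x) := cw.mul φ.continuous
  have : 0 < ∫ x, w x T * φ x := by
    refine hcont.integral_pos_of_hasCompactSupport_nonneg_nonzero (x := s)
      (φ.hasCompactSupport.mul_left) (fun x => ?_) ?_
    · by_cases hx : x ∈ Metric.ball s d
      · exact mul_nonneg (hball hx).le φ.nonneg
      · have : φ x = 0 := φ.zero_of_le_dist (by simpa using hx)
        simp [this]
    · have : φ s = 1 := φ.one_of_mem_closedBall (by simp [φ.rIn_pos.le])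
      simp [this, hpos.ne']
  linarith

end RMP

namespace RMP

lemma cut_exists : ∃ (X X1 X2 : ℝ → ℝ) (B : ℝ), Dec X X1 X2 ∧ 0 ≤ B ∧ (∀ s, |X s| ≤ B) ∧
    (∀ s, |X1 s| ≤ B) ∧ (∀ s, |X2 s| ≤ B) ∧ X 0 = 1 ∧
    ∀ s, 3 ≤ |s| → X s = 0 ∧ X1 s = 0 ∧ X2 s = 0 := by
  let φ : ContDiffBump (0:ℝ) := ⟨1, 2, one_pos, one_lt_two⟩
  have hdec := dec_of_compact (f := φ) φ.contDiff (fun x => φ.nonneg) φ.hasCompactSupport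
  obtain ⟨C, hC, h0, h1, h2⟩ := hdec.bound
  have hle : ∀ s : ℝ, C * exp (-|s|) ≤ C := fun s =>
    mul_le_of_le_one_right hC (exp_le_one_iff.2 (by simp))
  refine ⟨φ, deriv φ, deriv (deriv φ), C, hdec, hC, fun s => (h0 s).trans (hle s),
    fun s => (h1 s).trans (hle s), fun s => (h2 s).trans (hle s), ?_, fun s hs => ?_⟩
  · exact φ.one_of_mem_closedBall (by simp [φ.rIn_pos.le])
  · have hn : s ∉ tsupport φ := by
      rw [φ.tsupport_eq]
      simp only [Metric.mem_closedBall, dist_zero_right, norm_eq_abs, not_le]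
      change (2:ℝ) < |s|
      linarith
    have hn1 : s ∉ tsupport (deriv φ) := fun h => hn (closure_minimal (support_deriv_subset) (isClosed_tsupport _) h)
    have hn2 : s ∉ tsupport (deriv (deriv φ)) := fun h =>
      hn1 (closure_minimal (support_deriv_subset) (isClosed_tsupport _) h)
    exact ⟨image_eq_zero_of_notMem_tsupport hn, image_eq_zero_of_notMem_tsupport hn1,
      image_eq_zero_of_notMem_tsupport hn2⟩

lemma inner_cont {Z : ℝ → ℝ → ℝ} {T C D : ℝ}
    (zc : ContinuousOn (fun x : ℝ × ℝ => Z x.1 x.2) (univ ×ˢ Ioi 0))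
    (zb : ∀ s, ∀ t ∈ Ioc 0 T, |Z s t| ≤ C) {u : ℝ → ℝ} (hu : Continuous u)
    (hub : ∀ s, |u s| ≤ D * exp (-|s|)) :
    ContinuousOn (fun t => ∫ s, Z s t * u s) (Ioc 0 T) := by
  refine continuousOn_of_dominated (bound := fun s => C * (D * exp (-|s|)))
    (fun t ht => ((cont_slice zc ht.1).mul hu).aestronglyMeasurable)
    (fun t ht => Eventually.of_forall fun s => ?_)
    ((integrable_expAbs.const_mul D).const_mul C) (Eventually.of_forall fun s => ?_)
  · rw [norm_mul, norm_eq_abs, norm_eq_abs]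
    exact mul_le_mul (zb s t ht) (hub s) (abs_nonneg _) ((abs_nonneg _).trans (zb s t ht))
  · exact ((cont_slice' zc s).mono fun t ht => ht.1).mul continuousOn_const

lemma weak_dec {Z : ℝ → ℝ → ℝ} {g : ℝ → ℝ} {c t C D : ℝ} (ht : 0 < t)
    (zc : ContinuousOn (fun x : ℝ × ℝ => Z x.1 x.2) (univ ×ˢ Ioi 0))
    (zb : ∀ s, ∀ τ ∈ Ioc 0 t, |Z s τ| ≤ C) (gc : Continuous g) (gb : ∀ s, |g s| ≤ D)
    (hw : ∀ η η1 η2 R, Dec η η1 η2 → 0 < R →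
      (∀ s, R ≤ |s| → η s = 0 ∧ η1 s = 0 ∧ η2 s = 0) →
      ∫ τ in (0:ℝ)..t, ∫ s, Z s τ * (η2 s - c * η1 s) = ∫ s, g s * η s)
    {η η1 η2 : ℝ → ℝ} (h : Dec η η1 η2) :
    ∫ τ in (0:ℝ)..t, ∫ s, Z s τ * (η2 s - c * η1 s) = ∫ s, g s * η s := by
  obtain ⟨X, X1, X2, B, hX, hB, b0, b1, b2, hX0, hXv⟩ := cut_exists
  obtain ⟨E, hE, e0, e1, e2⟩ := h.bound
  have hC : 0 ≤ C := (abs_nonneg _).trans (zb 0 t ⟨ht, le_rfl⟩)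
  have hD : 0 ≤ D := (abs_nonneg _).trans (gb 0)
  let k : ℕ → ℝ := fun n => 1 / ((n:ℝ) + 1)
  have k0 : ∀ n, 0 < k n := fun n => by positivity
  have k1 : ∀ n, k n ≤ 1 := fun n => by
    rw [div_le_one (by positivity)]; linarith [(Nat.cast_nonneg n : (0:ℝ) ≤ n)]
  have kl : Tendsto k atTop (𝓝 0) := tendsto_one_div_add_atTop_nhds_zero_nat
  let H0 : ℕ → ℝ → ℝ := fun n s => η s * X (s * k n)
  let H1 : ℕ → ℝ → ℝ := fun n s => η1 s * X (s * k n) + η s * (X1 (s * k n) * k n)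
  let H2 : ℕ → ℝ → ℝ := fun n s => (η2 s * X (s * k n) + η1 s * (X1 (s * k n) * k n)) +
    (η1 s * (X1 (s * k n) * k n) + η s * (X2 (s * k n) * k n * k n))
  have bb : ∀ (a x y : ℝ) n, |a| ≤ E * y → |x| ≤ B → 0 ≤ y → |a * (x * k n)| ≤ E * B * y := by
    intro a x y n ha hx hy
    rw [abs_mul, abs_mul, abs_of_pos (k0 n)]
    calc |a| * (|x| * k n) ≤ (E * y) * (B * 1) := by
          gcongr; exact k1 n
      _ = _ := by ring
  have bb' : ∀ (a x y : ℝ), |a| ≤ E * y → |x| ≤ B → 0 ≤ y → |a * x| ≤ E * B * y := by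
    intro a x y ha hx hy
    rw [abs_mul]
    calc |a| * |x| ≤ (E * y) * B := by gcongr
      _ = _ := by ring
  have bk : ∀ x n, |x| ≤ B → |x * k n| ≤ B := by
    intro x n hx
    rw [abs_mul, abs_of_pos (k0 n)]
    calc |x| * k n ≤ B * 1 := by gcongr; exact k1 n
      _ = B := mul_one _
  have B0 : ∀ n s, |H0 n s| ≤ E * B * exp (-|s|) := fun n s => bb' _ _ _ (e0 s) (b0 _) (exp_pos _).le
  have B1 : ∀ n s, |H1 n s| ≤ 2 * (E * B) * exp (-|s|) := fun n s => by
    refine (abs_add_le _ _).trans ?_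
    have := bb' _ _ _ (e1 s) (b0 (s * k n)) (exp_pos _).le
    have := bb _ _ _ n (e0 s) (b1 (s * k n)) (exp_pos _).le
    linarith
  have B2 : ∀ n s, |H2 n s| ≤ 4 * (E * B) * exp (-|s|) := fun n s => by
    refine (abs_add_le _ _).trans ((add_le_add (abs_add_le _ _) (abs_add_le _ _)).trans ?_)
    have := bb' _ _ _ (e2 s) (b0 (s * k n)) (exp_pos _).le
    have := bb _ _ _ n (e1 s) (b1 (s * k n)) (exp_pos _).le
    have := bb _ _ _ n (e0 s) (bk _ n (b2 (s * k n))) (exp_pos _).le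
    linarith
  have hlin : ∀ n s, HasDerivAt (fun s : ℝ => s * k n) (k n) s := fun n s => by
    simpa using (hasDerivAt_id s).mul_const (k n)
  have dX : ∀ n s, HasDerivAt (fun s => X (s * k n)) (X1 (s * k n) * k n) s := fun n s =>
    (hX.d1 (s * k n)).comp s (hlin n s)
  have dX1 : ∀ n s, HasDerivAt (fun s => X1 (s * k n)) (X2 (s * k n) * k n) s := fun n s =>
    (hX.d2 (s * k n)).comp s (hlin n s)
  have cX := hX.cont
  have cX1 := hX.cont1
  have cX2 := hX.cont2
  have c0 := h.cont
  have c1 := h.cont1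
  have c2 := h.cont2
  have cH2 : ∀ n, Continuous (H2 n) := fun n => by simp only [H2]; fun_prop
  have hDec : ∀ n, Dec (H0 n) (H1 n) (H2 n) := fun n => by
    refine ⟨fun s => mul_nonneg (h.nonneg s) (hX.nonneg _), fun s => (h.d1 s).mul (dX n s), fun s => ?_, cH2 n, 4 * (E * B), by positivity,
      fun s => (B0 n s).trans ?_, fun s => (B1 n s).trans ?_, B2 n⟩
    · exact ((h.d2 s).mul (dX n s)).add ((h.d1 s).mul ((dX1 n s).mul_const (k n)))
    · exact mul_le_mul_of_nonneg_right (by nlinarith [mul_nonneg hE hB]) (exp_pos _).le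
    · gcongr; norm_num
  have hv : ∀ n s, 3 / k n ≤ |s| → H0 n s = 0 ∧ H1 n s = 0 ∧ H2 n s = 0 := fun n s hs => by
    rw [div_le_iff₀ (k0 n)] at hs
    obtain ⟨a, b, d⟩ := hXv (s * k n) (by rw [abs_mul, abs_of_pos (k0 n)]; exact hs)
    simp [H0, H1, H2, a, b, d]
  have key := fun n => hw _ _ _ (3 / k n) (hDec n) (div_pos three_pos (k0 n)) (hv n)
  -- pointwise limits
  have tl : ∀ s, Tendsto (fun n => s * k n) atTop (𝓝 0) := fun s => by
    simpa using kl.const_mul s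
  have tX : ∀ s, Tendsto (fun n => X (s * k n)) atTop (𝓝 1) := fun s => by
    rw [← hX0]; exact (cX.tendsto 0).comp (tl s)
  have tX1 : ∀ s, Tendsto (fun n => X1 (s * k n) * k n) atTop (𝓝 0) := fun s => by
    simpa using ((cX1.tendsto 0).comp (tl s)).mul kl
  have tX2 : ∀ s, Tendsto (fun n => X2 (s * k n) * k n * k n) atTop (𝓝 0) := fun s => by
    simpa using (((cX2.tendsto 0).comp (tl s)).mul kl).mul kl
  have t0 : ∀ s, Tendsto (fun n => H0 n s) atTop (𝓝 (η s)) := fun s => by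
    simpa using (tX s).const_mul (η s)
  have t1 : ∀ s, Tendsto (fun n => H1 n s) atTop (𝓝 (η1 s)) := fun s => by
    simpa using ((tX s).const_mul (η1 s)).add ((tX1 s).const_mul (η s))
  have t2 : ∀ s, Tendsto (fun n => H2 n s) atTop (𝓝 (η2 s)) := fun s => by
    simpa using (((tX s).const_mul (η2 s)).add ((tX1 s).const_mul (η1 s))).add
      (((tX1 s).const_mul (η1 s)).add ((tX2 s).const_mul (η s)))
  have r1 : Tendsto (fun n => ∫ s, g s * H0 n s) atTop (𝓝 (∫ s, g s * η s)) := by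
    refine tendsto_integral_of_dominated_convergence (fun s => D * (E * B * exp (-|s|)))
      (fun n => (gc.mul (hDec n).cont).aestronglyMeasurable)
      ((integrable_expAbs.const_mul _).const_mul _) (fun n => Eventually.of_forall fun s => ?_)
      (Eventually.of_forall fun s => (t0 s).const_mul _)
    rw [norm_mul, norm_eq_abs, norm_eq_abs]
    exact mul_le_mul (gb s) (B0 n s) (abs_nonneg _) hD
  set F := 4 * (E * B) + |c| * (2 * (E * B)) with hF
  have uB : ∀ n s, |H2 n s - c * H1 n s| ≤ F * exp (-|s|) := fun n s => by
    refine (abs_sub _ _).trans ?_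
    rw [abs_mul, hF, add_mul, mul_assoc |c|]
    have := mul_le_mul_of_nonneg_left (B1 n s) (abs_nonneg c)
    linarith [B2 n s]
  have uc : ∀ n, Continuous (fun s => H2 n s - c * H1 n s) := fun n =>
    (cH2 n).sub ((hDec n).cont1.const_mul c)
  have zbd : ∀ n, ∀ τ ∈ Ioc 0 t, ∀ s, ‖Z s τ * (H2 n s - c * H1 n s)‖ ≤ C * (F * exp (-|s|)) :=
    fun n τ hτ s => by
      rw [norm_mul, norm_eq_abs, norm_eq_abs]
      exact mul_le_mul (zb s τ hτ) (uB n s) (abs_nonneg _) hC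
  have bi : Integrable (fun s => C * (F * exp (-|s|))) :=
    (integrable_expAbs.const_mul _).const_mul _
  have r2 : Tendsto (fun n => ∫ τ in (0:ℝ)..t, ∫ s, Z s τ * (H2 n s - c * H1 n s)) atTop
      (𝓝 (∫ τ in (0:ℝ)..t, ∫ s, Z s τ * (η2 s - c * η1 s))) := by
    refine intervalIntegral.tendsto_integral_filter_of_dominated_convergence
      (fun _ => ∫ s, C * (F * exp (-|s|))) (Eventually.of_forall fun n => ?_)
      (Eventually.of_forall fun n => Eventually.of_forall fun τ hτ => ?_)
      (by simp) (Eventually.of_forall fun τ hτ => ?_)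
    · rw [uIoc_of_le ht.le]
      exact (inner_cont zc zb (uc n) (uB n)).aestronglyMeasurable measurableSet_Ioc
    · rw [uIoc_of_le ht.le] at hτ
      exact norm_integral_le_of_norm_le bi (Eventually.of_forall (zbd n τ hτ))
    · rw [uIoc_of_le ht.le] at hτ
      exact tendsto_integral_of_dominated_convergence _
        (fun n => ((cont_slice zc hτ.1).mul (uc n)).aestronglyMeasurable) bi
        (fun n => Eventually.of_forall (zbd n τ hτ))
        (Eventually.of_forall fun s => ((t2 s).sub ((t1 s).const_mul c)).const_mul _)
  exact tendsto_nhds_unique r2 (by simpa only [key] using r1)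

end RMP

namespace RMP

def psi (f : ℝ → ℝ) (a r : ℝ) : ℝ := if 0 < r then r ^ a * f (log r) else 0

lemma psi_pos (f : ℝ → ℝ) (a : ℝ) {r : ℝ} (hr : 0 < r) : psi f a r = r ^ a * f (log r) := by
  simp [psi, hr]

lemma psi_zero {f : ℝ → ℝ} {a R : ℝ} (hf : ∀ s, R ≤ |s| → f s = 0) {r : ℝ}
    (hr : r < exp (-R)) : psi f a r = 0 := by
  unfold psi
  split_ifs with h
  · have : log r < -R := (log_lt_iff_lt_exp h).2 hr
    rw [hf _ (by have := neg_abs_le (log r); linarith), mul_zero]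
  · rfl

lemma psi_ev_pos (f : ℝ → ℝ) (a : ℝ) {r : ℝ} (hr : 0 < r) :
    psi f a =ᶠ[𝓝 r] fun r => r ^ a * f (log r) := by
  filter_upwards [Ioi_mem_nhds hr] with x hx
  exact psi_pos f a hx

lemma psi_ev_zero {f : ℝ → ℝ} {a R : ℝ} (hf : ∀ s, R ≤ |s| → f s = 0) {r : ℝ} (hr : r ≤ 0) :
    psi f a =ᶠ[𝓝 r] fun _ => 0 := by
  filter_upwards [Iio_mem_nhds (hr.trans_lt (exp_pos (-R)))] with x hx
  exact psi_zero hf hx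

lemma psi_cont {f : ℝ → ℝ} {a R : ℝ} (hc : Continuous f) (hf : ∀ s, R ≤ |s| → f s = 0) :
    Continuous (psi f a) := by
  refine continuous_iff_continuousAt.2 fun r => ?_
  rcases le_or_gt r 0 with hr | hr
  · exact continuousAt_const.congr (psi_ev_zero hf hr).symm
  · refine ContinuousAt.congr ?_ (psi_ev_pos f a hr).symm
    exact (continuousAt_id.rpow_const (Or.inl hr.ne')).mul
      (hc.continuousAt.comp (continuousAt_log hr.ne'))

lemma psi_deriv {f f1 : ℝ → ℝ} {a R : ℝ} (hd : ∀ s, HasDerivAt f (f1 s) s)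
    (hf : ∀ s, R ≤ |s| → f s = 0) (r : ℝ) :
    HasDerivAt (psi f a) (psi (fun s => a * f s + f1 s) (a - 1) r) r := by
  rcases le_or_gt r 0 with hr | hr
  · have : psi (fun s => a * f s + f1 s) (a - 1) r = 0 := by
      unfold psi; rw [if_neg (not_lt.2 hr)]
    rw [this]
    exact (hasDerivAt_const r (0:ℝ)).congr_of_eventuallyEq (psi_ev_zero hf hr)
  · refine HasDerivAt.congr_of_eventuallyEq ?_ (psi_ev_pos f a hr)
    have h1 := (hasDerivAt_rpow_const (p := a) (Or.inl hr.ne')).mul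
      ((hd (log r)).comp r (hasDerivAt_log hr.ne'))
    refine h1.congr_deriv ?_
    rw [psi_pos _ _ hr, rpow_sub_one hr.ne']
    simp only [Function.comp]
    ring

lemma cov {g : ℝ → ℝ} (hg : ContinuousOn g (Ioi 0)) {R : ℝ} 
    {k : ℝ → ℝ} (hk : ∀ s, R ≤ |s| → k s = 0) (hR : 0 < R)
    (h : ∀ s, g (exp s) * exp s = k s) :
    ∫ r in exp (-R)..exp R, g r = ∫ s, k s := by
  have h1 := intervalIntegral.integral_comp_mul_deriv'' (a := -R) (b := R) (f := exp) (f' := exp)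
    (g := g) continuous_exp.continuousOn
    (fun x _ => (Real.hasDerivAt_exp x).hasDerivWithinAt) continuous_exp.continuousOn
    (hg.mono (by rintro _ ⟨x, _, rfl⟩; exact exp_pos x))
  rw [← h1]
  simp only [Function.comp, h]
  refine intervalIntegral.integral_eq_integral_of_support_subset fun s hs => ?_
  have : |s| < R := by
    by_contra hc
    exact hs (hk s (not_lt.1 hc))
  rw [abs_lt] at this
  exact ⟨this.1, this.2.le⟩

lemma sform {N : ℕ} {m : ℝ} (hm : 1 < m) {v : ℝ → ℝ → ℝ} {v₀ : ℝ → ℝ}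
    (hsol : IsRadialVeryWeakSolution N m v v₀) (hv0 : Continuous v₀) {T : ℝ} (hT : 0 < T)
    {η η1 η2 : ℝ → ℝ} {R : ℝ} (h : Dec η η1 η2) (hR : 0 < R)
    (hv : ∀ s, R ≤ |s| → η s = 0 ∧ η1 s = 0 ∧ η2 s = 0) :
    ∫ τ in (0:ℝ)..T, ∫ s, v (exp s) τ ^ m * (η2 s - ((N:ℝ) - 2) * η1 s) =
      ∫ s, (v (exp s) T - v₀ (exp s)) * η s := by
  obtain ⟨h0, hc, hb, hw⟩ := hsol
  set c : ℝ := (N:ℝ) - 2 with hcdef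
  have hN1 : (N:ℝ) - 1 = c + 1 := by rw [hcdef]; ring
  have v0 : ∀ s, R ≤ |s| → η s = 0 := fun s hs => (hv s hs).1
  have v1 : ∀ s, R ≤ |s| → -c * η s + η1 s = 0 := fun s hs => by
    rw [(hv s hs).1, (hv s hs).2.1]; simp
  have v2 : ∀ s, R ≤ |s| → (-c - 1) * (-c * η s + η1 s) + (-c * η1 s + η2 s) = 0 := fun s hs => by
    rw [(hv s hs).1, (hv s hs).2.1, (hv s hs).2.2]; simp
  have c0 := h.cont
  have c1 := h.cont1
  have c2 := h.cont2
  have d1 : ∀ s, HasDerivAt (fun s => -c * η s + η1 s) (-c * η1 s + η2 s) s := fun s =>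
    ((h.d1 s).const_mul (-c)).add (h.d2 s)
  have hab : exp (-R) < exp R := exp_lt_exp.2 (by linarith)
  have aR : |log (exp R)| = R := by rw [log_exp, abs_of_pos hR]
  have aR' : |log (exp (-R))| = R := by rw [log_exp, abs_neg, abs_of_pos hR]
  have key := hw (exp (-R)) (exp R) T (fun r _ => psi η (-c) r) (fun _ _ => 0)
    (fun r _ => psi (fun s => -c * η s + η1 s) (-c - 1) r)
    (fun r _ => psi (fun s => (-c - 1) * (-c * η s + η1 s) + (-c * η1 s + η2 s)) (-c - 1 - 1) r)
    (exp_pos _) hab hT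
    (fun r _ => by
      unfold psi
      split_ifs with hr
      · exact mul_nonneg (rpow_nonneg hr.le _) (h.nonneg _)
      · rfl)
    (fun r t => hasDerivAt_const _ _)
    (fun r t => psi_deriv h.d1 v0 r)
    (fun r t => psi_deriv d1 v1 r)
    ((psi_cont c0 v0).comp continuous_fst)
    continuous_const
    ((psi_cont (by fun_prop) v1).comp continuous_fst)
    ((psi_cont (by fun_prop) v2).comp continuous_fst)
    (fun t _ => ⟨by rw [psi_pos _ _ (exp_pos _), v0 _ aR'.ge, mul_zero],
      by rw [psi_pos _ _ (exp_pos _), v0 _ aR.ge, mul_zero]⟩)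
  have z1 : psi (fun s => -c * η s + η1 s) (-c - 1) (exp R) = 0 := by
    rw [psi_pos _ _ (exp_pos _), v1 _ aR.ge, mul_zero]
  have z2 : psi (fun s => -c * η s + η1 s) (-c - 1) (exp (-R)) = 0 := by
    rw [psi_pos _ _ (exp_pos _), v1 _ aR'.ge, mul_zero]
  simp only [z1, z2, mul_zero, sub_self, intervalIntegral.integral_zero, add_zero, zero_add,
    hN1] at key
  have vc : ∀ t, 0 < t → ContinuousOn (fun r => v r t) (Ioi 0) := fun t ht =>
    hc.comp (f := fun r : ℝ => (r, t)) (by fun_prop) fun r hr => ⟨mem_Ici.2 (le_of_lt hr), ht⟩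
  have rc : ∀ a : ℝ, ContinuousOn (fun r : ℝ => r ^ a) (Ioi 0) := fun a =>
    continuousOn_id.rpow_const fun x hx => Or.inl (ne_of_gt hx)
  have rhs : ∫ r in exp (-R)..exp R, r ^ (-2 : ℝ) * (v r T * psi η (-c) r - v₀ r * psi η (-c) r)
      * r ^ (c + 1) = ∫ s, (v (exp s) T - v₀ (exp s)) * η s := by
    refine cov ?_ (R := R) (fun s hs => by rw [v0 s hs, mul_zero]) hR fun s => ?_
    · have p1 : ContinuousOn (psi η (-c)) (Ioi 0) := (psi_cont c0 v0).continuousOn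
      exact ((rc _).mul (((vc T hT).mul p1).sub (hv0.continuousOn.mul p1))).mul (rc _)
    · rw [psi_pos _ _ (exp_pos _), log_exp, ← exp_mul, ← exp_mul, ← exp_mul]
      have : exp (s * -2) * exp (s * -c) * exp (s * (c + 1)) * exp s = 1 := by
        rw [← exp_add, ← exp_add, ← exp_add, exp_eq_one_iff]; ring
      linear_combination (v (exp s) T - v₀ (exp s)) * η s * this
  have lhs : ∀ t, 0 < t → ∫ r in exp (-R)..exp R,
      (psi (fun s => (-c - 1) * (-c * η s + η1 s) + (-c * η1 s + η2 s)) (-c - 1 - 1) r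
       + (c + 1) / r * psi (fun s => -c * η s + η1 s) (-c - 1) r) * v r t ^ m * r ^ (c + 1) =
      ∫ s, v (exp s) t ^ m * (η2 s - c * η1 s) := by
    intro t ht
    refine cov ?_ (R := R) (fun s hs => by rw [(hv s hs).2.1, (hv s hs).2.2]; simp) hR fun s => ?_
    · refine ContinuousOn.mul (ContinuousOn.mul (ContinuousOn.add
        (psi_cont (by fun_prop) v2).continuousOn (ContinuousOn.mul ?_
          (psi_cont (by fun_prop) v1).continuousOn)) ?_) (rc _)
      · exact continuousOn_const.div continuousOn_id fun x hx => ne_of_gt hx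
      · exact (vc t ht).rpow_const fun x _ => Or.inr (by linarith)
    · rw [psi_pos _ _ (exp_pos _), psi_pos _ _ (exp_pos _), log_exp, ← exp_mul, ← exp_mul,
        ← exp_mul, div_eq_mul_inv, ← exp_neg]
      have e1 : exp (s * (-c - 1 - 1)) * exp (s * (c + 1)) * exp s = 1 := by
        rw [← exp_add, ← exp_add, exp_eq_one_iff]; ring
      have e2 : exp (-s) * exp (s * (-c - 1)) * exp (s * (c + 1)) * exp s = 1 := by
        rw [← exp_add, ← exp_add, ← exp_add, exp_eq_one_iff]; ring
      linear_combination v (exp s) t ^ m * ((-c - 1) * (-c * η s + η1 s) + (-c * η1 s + η2 s)) * e1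
        + v (exp s) t ^ m * (c + 1) * (-c * η s + η1 s) * e2
  rw [rhs] at key
  rw [← key]
  refine intervalIntegral.integral_congr_ae (Eventually.of_forall fun t ht => ?_)
  rw [uIoc_of_le hT.le] at ht
  exact (lhs t ht.1).symm

end RMP

namespace RMP

lemma Dec.shift {η η1 η2 : ℝ → ℝ} (h : Dec η η1 η2) (l : ℝ) :
    Dec (fun s => η (s - l)) (fun s => η1 (s - l)) (fun s => η2 (s - l)) := by
  obtain ⟨C, hC, b0, b1, b2⟩ := h.bound
  have hb : ∀ s, C * exp (-|s - l|) ≤ C * exp |l| * exp (-|s|) := fun s => by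
    have := expAbs_le s (s - l)
    rw [sub_sub_cancel] at this
    have := mul_le_mul_of_nonneg_left this hC
    linarith
  refine ⟨fun s => h.nonneg _, fun s => ?_, fun s => ?_, h.cont2.comp (by fun_prop),
    C * exp |l|, by positivity, fun s => (b0 _).trans (hb s), fun s => (b1 _).trans (hb s),
    fun s => (b2 _).trans (hb s)⟩
  · exact (h.d1 (s - l)).comp_sub_const s l
  · exact (h.d2 (s - l)).comp_sub_const s l

lemma rpow_lip {m C x y : ℝ} (hm : 1 < m) (hx : x ∈ Icc 0 C) (hy : y ∈ Icc 0 C) :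
    |x ^ m - y ^ m| ≤ m * C ^ (m - 1) * |x - y| := by
  refine (convex_Icc (0:ℝ) C).norm_image_sub_le_of_norm_hasDerivWithin_le (f := fun x => x ^ m)
    (f' := fun x => m * x ^ (m - 1)) (fun a ha => ?_) (fun a ha => ?_) hy hx
  · exact (hasDerivAt_rpow_const (Or.inr hm.le)).hasDerivWithinAt
  · have := rpow_nonneg ha.1 (m - 1)
    rw [norm_eq_abs, abs_of_nonneg (by positivity)]
    exact mul_le_mul_of_nonneg_left (rpow_le_rpow ha.1 ha.2 (by linarith)) (by linarith)

lemma rpow_sign {m x y : ℝ} (hm : 1 < m) (hx : 0 ≤ x) (hy : 0 ≤ y) :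
    0 ≤ (x ^ m - y ^ m) * (x - y) := by
  rcases le_total x y with h | h
  · have := rpow_le_rpow hx h (by linarith : 0 ≤ m)
    exact mul_nonneg_of_nonpos_of_nonpos (by linarith) (by linarith)
  · have := rpow_le_rpow hy h (by linarith : 0 ≤ m)
    exact mul_nonneg (by linarith) (by linarith)

lemma main_core {N : ℕ} {m : ℝ} (hm : 1 < m) {v : ℝ → ℝ → ℝ} {v₀ : ℝ → ℝ}
    (hsol : IsRadialVeryWeakSolution N m v v₀) (hv0 : Continuous v₀)
    {C0 : ℝ} (hv0b : ∀ r, v₀ r ≤ C0) (hv0n : ∀ r, 0 ≤ v₀ r)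
    (hmono : ∀ r₁ r₂ : ℝ, 0 ≤ r₁ → r₁ ≤ r₂ → v₀ r₂ ≤ v₀ r₁) {T : ℝ} (hT : 0 < T)
    {l : ℝ} (hl : 0 ≤ l) :
    ∃ K M : ℝ, Core ((N:ℝ) - 2) T K M (fun s t => v (exp (s + l)) t - v (exp s) t)
      (fun s t => v (exp (s + l)) t ^ m - v (exp s) t ^ m)
      (fun s => v₀ (exp (s + l)) - v₀ (exp s)) := by
  have hsol' := hsol
  obtain ⟨h0, hc, hb, hw⟩ := hsol
  obtain ⟨C, hC⟩ := hb T hT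
  have hm0 : 0 ≤ m := by linarith
  have hI : ∀ s, ∀ t ∈ Ioc 0 T, v (exp s) t ∈ Icc 0 C := fun s t ht =>
    ⟨h0 _ _, hC _ (mem_Ici.2 (exp_pos s).le) t ⟨ht.1.le, ht.2⟩⟩
  have hCn : 0 ≤ C := (hI 0 T ⟨hT, le_rfl⟩).1.trans (hI 0 T ⟨hT, le_rfl⟩).2
  have hC0 : 0 ≤ C0 := (hv0n 0).trans (hv0b 0)
  have Uc : ContinuousOn (fun x : ℝ × ℝ => v (exp x.1) x.2) (univ ×ˢ Ioi 0) :=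
    hc.comp (f := fun x : ℝ × ℝ => (exp x.1, x.2)) (by fun_prop) fun x hx =>
      ⟨mem_Ici.2 (exp_pos x.1).le, hx.2⟩
  have Ucl : ContinuousOn (fun x : ℝ × ℝ => v (exp (x.1 + l)) x.2) (univ ×ˢ Ioi 0) :=
    hc.comp (f := fun x : ℝ × ℝ => (exp (x.1 + l), x.2)) (by fun_prop) fun x hx =>
      ⟨mem_Ici.2 (exp_pos _).le, hx.2⟩
  have Um : ContinuousOn (fun x : ℝ × ℝ => v (exp x.1) x.2 ^ m) (univ ×ˢ Ioi 0) :=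
    Uc.rpow_const fun _ _ => Or.inr hm0
  have Uml : ContinuousOn (fun x : ℝ × ℝ => v (exp (x.1 + l)) x.2 ^ m) (univ ×ˢ Ioi 0) :=
    Ucl.rpow_const fun _ _ => Or.inr hm0
  have zb : ∀ s, ∀ t ∈ Ioc 0 T, |v (exp s) t ^ m| ≤ C ^ m := fun s t ht => by
    rw [abs_of_nonneg (rpow_nonneg (hI s t ht).1 _)]
    exact rpow_le_rpow (hI s t ht).1 (hI s t ht).2 hm0
  have v0e : Continuous (fun s => v₀ (exp s)) := by fun_prop
  have gb : ∀ t ∈ Ioc 0 T, ∀ s, |v (exp s) t - v₀ (exp s)| ≤ C + C0 := fun t ht s => by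
    have := hI s t ht
    rw [abs_le]
    constructor <;> linarith [this.1, this.2, hv0n (exp s), hv0b (exp s)]
  have gc : ∀ t ∈ Ioc 0 T, Continuous (fun s => v (exp s) t - v₀ (exp s)) := fun t ht =>
    (cont_slice (z := fun s t => v (exp s) t) Uc ht.1).sub v0e
  have W : ∀ t ∈ Ioc 0 T, ∀ η η1 η2, Dec η η1 η2 →
      ∫ τ in (0:ℝ)..t, ∫ s, v (exp s) τ ^ m * (η2 s - ((N:ℝ) - 2) * η1 s) =
      ∫ s, (v (exp s) t - v₀ (exp s)) * η s := fun t ht η η1 η2 hη =>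
    weak_dec (Z := fun s τ => v (exp s) τ ^ m) ht.1 Um
      (fun s τ hτ => zb s τ ⟨hτ.1, hτ.2.trans ht.2⟩) (gc t ht) (gb t ht)
      (fun η η1 η2 R h hR hv => sform hm hsol' hv0 ht.1 h hR hv) hη
  refine ⟨m * C ^ (m - 1), C + C0, hT, mul_nonneg hm0 (rpow_nonneg hCn _), by positivity,
    Ucl.sub Uc, Uml.sub Um, fun s t ht => ?_, fun s t ht => ?_, fun s t ht => ?_,
    (v0e.comp (continuous_add_const l)).sub v0e, fun s => ?_, fun s => ?_, ?_⟩
  · have h1 := hI s t ht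
    have h2 := hI (s + l) t ht
    rw [abs_le]
    constructor <;> linarith [h1.1, h1.2, h2.1, h2.2]
  · exact rpow_lip hm (hI _ t ht) (hI _ t ht)
  · exact rpow_sign hm (hI _ t ht).1 (hI _ t ht).1
  · have := hmono (exp s) (exp (s + l)) (exp_pos s).le (exp_le_exp.2 (by linarith))
    linarith
  · rw [abs_le]
    constructor <;> linarith [hv0n (exp s), hv0b (exp s), hv0n (exp (s + l)), hv0b (exp (s + l))]
  · intro η η1 η2 hη t ht
    set c := (N:ℝ) - 2
    have hη' := hη.shift l
    have w1 := W t ht _ _ _ hη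
    have w2 := W t ht _ _ _ hη'
    obtain ⟨E, hE, e0, e1, e2⟩ := hη.bound
    obtain ⟨D, hD⟩ : ∃ D, ∀ s, |η2 s - c * η1 s| ≤ D * exp (-|s|) := by
      refine ⟨E + |c| * E, fun s => (abs_sub _ _).trans ?_⟩
      rw [abs_mul]
      have := mul_le_mul_of_nonneg_left (e1 s) (abs_nonneg c)
      linarith [e2 s]
    have uc : Continuous (fun s => η2 s - c * η1 s) := hη.cont2.sub (hη.cont1.const_mul c)
    have sh : ∀ F G : ℝ → ℝ, ∫ s, F s * G (s - l) = ∫ s, F (s + l) * G s := fun F G => by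
      rw [← integral_add_right_eq_self (fun s => F s * G (s - l)) l]
      simp only [add_sub_cancel_right]
    have sh1 : ∀ τ, ∫ s, v (exp s) τ ^ m * (η2 (s - l) - c * η1 (s - l)) =
        ∫ s, v (exp (s + l)) τ ^ m * (η2 s - c * η1 s) := fun τ =>
      sh (fun s => v (exp s) τ ^ m) (fun s => η2 s - c * η1 s)
    have sh2 : ∫ s, (v (exp s) t - v₀ (exp s)) * η (s - l) =
        ∫ s, (v (exp (s + l)) t - v₀ (exp (s + l))) * η s :=
      sh (fun s => v (exp s) t - v₀ (exp s)) η
    simp only [sh1] at w2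
    rw [sh2] at w2
    have zb' : ∀ s, ∀ τ ∈ Ioc 0 t, |v (exp s) τ ^ m| ≤ C ^ m := fun s τ hτ =>
      zb s τ ⟨hτ.1, hτ.2.trans ht.2⟩
    have ii : ∀ Z : ℝ → ℝ → ℝ, ContinuousOn (fun x : ℝ × ℝ => Z x.1 x.2) (univ ×ˢ Ioi 0) →
        (∀ s, ∀ τ ∈ Ioc 0 t, |Z s τ| ≤ C ^ m) →
        (∀ τ ∈ Ioc 0 t, Integrable (fun s => Z s τ * (η2 s - c * η1 s))) ∧
        IntervalIntegrable (fun τ => ∫ s, Z s τ * (η2 s - c * η1 s)) volume 0 t := by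
      intro Z Zc Zb
      refine ⟨fun τ hτ => integrable_bdd (cont_slice Zc hτ.1) uc (fun s => Zb s τ hτ) hD, ?_⟩
      rw [intervalIntegrable_iff_integrableOn_Ioc_of_le ht.1.le]
      refine Integrable.of_bound
        ((inner_cont Zc Zb uc hD).aestronglyMeasurable measurableSet_Ioc)
        (∫ s, C ^ m * (D * exp (-|s|))) ?_
      refine (ae_restrict_iff' measurableSet_Ioc).2 (Eventually.of_forall fun τ hτ => ?_)
      refine norm_integral_le_of_norm_le ((integrable_expAbs.const_mul _).const_mul _)
        (Eventually.of_forall fun s => ?_)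
      rw [norm_mul, norm_eq_abs, norm_eq_abs]
      exact mul_le_mul (Zb s τ hτ) (hD s) (abs_nonneg _) (rpow_nonneg hCn _)
    obtain ⟨i1, j1⟩ := ii (fun s t => v (exp s) t ^ m) Um zb'
    obtain ⟨i2, j2⟩ := ii (fun s t => v (exp (s + l)) t ^ m) Uml (fun s τ hτ => zb' _ τ hτ)
    have g1 : Integrable (fun s => (v (exp s) t - v₀ (exp s)) * η s) :=
      integrable_bdd (gc t ht) hη.cont (gb t ht) e0
    have g2 : Integrable (fun s => (v (exp (s + l)) t - v₀ (exp (s + l))) * η s) :=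
      integrable_bdd ((gc t ht).comp (continuous_add_const l)) hη.cont (fun s => gb t ht _) e0
    have L : ∫ τ in (0:ℝ)..t, ∫ s, (v (exp (s + l)) τ ^ m - v (exp s) τ ^ m) *
        (η2 s - c * η1 s) = (∫ τ in (0:ℝ)..t, ∫ s, v (exp (s + l)) τ ^ m * (η2 s - c * η1 s)) -
        ∫ τ in (0:ℝ)..t, ∫ s, v (exp s) τ ^ m * (η2 s - c * η1 s) := by
      rw [← intervalIntegral.integral_sub j2 j1]
      refine intervalIntegral.integral_congr_ae (Eventually.of_forall fun τ hτ => ?_)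
      rw [uIoc_of_le ht.1.le] at hτ
      rw [← integral_sub (i2 τ hτ) (i1 τ hτ)]
      simp only [sub_mul]
    rw [L, w1, w2, ← integral_sub g2 g1]
    refine integral_congr_ae (Eventually.of_forall fun s => ?_)
    simp only
    ring

end RMP

/-- **Lemma 2.3 (preservation of radial monotonicity).** Let `N ≥ 1`, `m > 1`, and let
`u` (radial representative `v`, `v r t = u(x,t)` for `r = |x|`) be a radial very weak
solution of `|x|^{-2} ∂ₜ u = Δ(u^m)` with initial datum `u₀ ∈ L^∞(ℝ^N) ∩ C(ℝ^N)`,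
`u₀ ≥ 0`, `u₀ ≢ 0`, radially symmetric and radially non-increasing.  Then for every
`t > 0`, `u(·,t)` is radially symmetric and radially non-increasing in `r = |x|`. -/
theorem radial_monotonicity_preserved
    (N : ℕ) (hN : 1 ≤ N) (m : ℝ) (hm : 1 < m)
    (v : ℝ → ℝ → ℝ) (v₀ : ℝ → ℝ)
    (hsol : IsRadialVeryWeakSolution N m v v₀)
    (hv₀cont : Continuous v₀)
    (hv₀bdd : ∃ C : ℝ, ∀ r, v₀ r ≤ C)
    (hv₀nonneg : ∀ r, 0 ≤ v₀ r)
    (hv₀ne : ∃ r, 0 ≤ r ∧ v₀ r ≠ 0)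
    (hv₀mono : ∀ r₁ r₂ : ℝ, 0 ≤ r₁ → r₁ ≤ r₂ → v₀ r₂ ≤ v₀ r₁) :
    ∀ t : ℝ, 0 < t → ∀ r₁ r₂ : ℝ, 0 ≤ r₁ → r₁ ≤ r₂ → v r₂ t ≤ v r₁ t := by
  intro t ht
  obtain ⟨C0, hC0⟩ := hv₀bdd
  have hN' : (-1:ℝ) ≤ (N:ℝ) - 2 := by
    have : (1:ℝ) ≤ N := by exact_mod_cast hN
    linarith
  have pos : ∀ r₁ r₂ : ℝ, 0 < r₁ → r₁ ≤ r₂ → v r₂ t ≤ v r₁ t := by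
    intro r₁ r₂ h1 h12
    obtain ⟨K, M, H⟩ := RMP.main_core hm hsol hv₀cont hC0 hv₀nonneg hv₀mono ht
      (l := log r₂ - log r₁) (sub_nonneg.2 (log_le_log h1 h12))
    have := H.le_zero hN' (log r₁)
    simp only [add_sub_cancel, exp_log h1, exp_log (h1.trans_le h12)] at this
    linarith
  intro r₁ r₂ h1 h12
  rcases h1.eq_or_lt with h | h
  · subst h
    rcases h12.eq_or_lt with h' | h'
    · rw [← h']
    · have hc : ContinuousOn (fun r => v r t) (Ici 0) :=
        hsol.2.1.comp (f := fun r : ℝ => (r, t)) (by fun_prop) fun r hr => ⟨hr, ht⟩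
      have ht0 : Tendsto (fun r => v r t) (𝓝[>] 0) (𝓝 (v 0 t)) :=
        (hc 0 self_mem_Ici).mono_left (nhdsWithin_mono _ Ioi_subset_Ici_self)
      refine ge_of_tendsto ht0 ?_
      filter_upwards [Ioo_mem_nhdsGT h'] with r hr
      exact pos r r₂ hr.1 hr.2.le
  · exact pos r₁ r₂ h h12
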